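/- arXiv:1603.02330 — 3 statements merged into one kernel-verified Lean document; each statement's English description precedes it below -/
import Mathlib

section
/- Let m, n be positive integers, let E ⊂ ℝⁿ be finite, and let f : E → [0,∞). Then there is a constant C depending only on m and n such that the family Γ⃗_f = (Γ_f(x,M))_{x∈E,M>0} is a (C,1)-convex shape field: each Γ_f(x,M) is convex; Γ_f(x,M') ⊆ Γ_f(x,M) for 0 < M' ≤ M; and whenever 0 < δ ≤ 1, x ∈ E, M > 0, P₁, P₂ ∈ Γ_f(x,M) satisfy |∂^β(P₁−P₂)(x)| ≤ Mδ^{m−|β|} for |β| ≤ m−1, and Q₁, Q₂ ∈ 𝒫 satisfy |∂^β Q_i(x)| ≤ δ^{−|β|} for |β| ≤ m−1 (i = 1, 2) and Q₁⊙_x Q₁ + Q₂⊙_x Q₂ = 1, then Q₁⊙_x Q₁⊙_x P₁ + Q₂⊙_x Q₂⊙_x P₂ ∈ Γ_f(x, CM). -/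
open scoped BigOperators

noncomputable section

abbrev Euc (n : ℕ) : Type := EuclideanSpace ℝ (Fin n)
abbrev MPoly (n : ℕ) : Type := MvPolynomial (Fin n) ℝ

/-- Partial derivative in the `i`-th coordinate direction. -/
noncomputable def pD {n : ℕ} (i : Fin n) (F : Euc n → ℝ) : Euc n → ℝ :=
  fun x => fderiv ℝ F x (EuclideanSpace.single i (1 : ℝ))

/-- The multi-index partial derivative `∂^α F`. -/
noncomputable def mD {n : ℕ} (α : Fin n → ℕ) (F : Euc n → ℝ) : Euc n → ℝ :=
  (((List.finRange n).flatMap fun i => List.replicate (α i) i)).foldr pD F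

/-- Partial derivative within a set. -/
noncomputable def pDW {n : ℕ} (s : Set (Euc n)) (i : Fin n) (F : Euc n → ℝ) : Euc n → ℝ :=
  fun x => fderivWithin ℝ F s x (EuclideanSpace.single i (1 : ℝ))

/-- Multi-index partial derivative within a set. -/
noncomputable def mDW {n : ℕ} (s : Set (Euc n)) (α : Fin n → ℕ) (F : Euc n → ℝ) : Euc n → ℝ :=
  (((List.finRange n).flatMap fun i => List.replicate (α i) i)).foldr (pDW s) F

/-- The order `|α|` of a multi-index. -/
def deg {n : ℕ} (α : Fin n → ℕ) : ℕ := ∑ i, α i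

/-- Evaluation of an `n`-variable polynomial at a point of `ℝⁿ`. -/
noncomputable def peval {n : ℕ} (P : MPoly n) (x : Euc n) : ℝ :=
  MvPolynomial.eval (fun i => x i) P

/-- `F ∈ C^m(ℝⁿ)` with `‖F‖_{C^m(ℝⁿ)} ≤ M`. -/
def CmNormLe (m n : ℕ) (F : Euc n → ℝ) (M : ℝ) : Prop :=
  ContDiff ℝ (m : ℕ∞) F ∧ ∀ α : Fin n → ℕ, deg α ≤ m → ∀ x : Euc n, |mD α F x| ≤ M

/-- `F ∈ C^{m-1,1}(ℝⁿ)` with `‖F‖_{C^{m-1,1}(ℝⁿ)} ≤ M`. -/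
def CmLipNormLe (m n : ℕ) (F : Euc n → ℝ) (M : ℝ) : Prop :=
  ContDiff ℝ ((m - 1 : ℕ) : ℕ∞) F ∧
  (∀ α : Fin n → ℕ, deg α ≤ m - 1 → ∀ x : Euc n, |mD α F x| ≤ M) ∧
  (∀ α : Fin n → ℕ, deg α = m - 1 → ∀ i : Fin n, ∀ x : Euc n, ∀ t : ℝ,
    |mD α F (x + t • EuclideanSpace.single i (1 : ℝ)) - mD α F x| ≤ M * |t|)

/-- `J_x(F) = P`, i.e. `P` is the `(m-1)`-st order Taylor polynomial of `F` at `x`. -/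
def IsJetAt (m n : ℕ) (F : Euc n → ℝ) (x : Euc n) (P : MPoly n) : Prop :=
  P.totalDegree ≤ m - 1 ∧
  ∀ α : Fin n → ℕ, deg α ≤ m - 1 → mD α (peval P) x = mD α F x

/-- `J_x^+(F) = P`, i.e. `P` is the `m`-th order Taylor polynomial of `F` at `x`. -/
def IsJetPlusAt (m n : ℕ) (F : Euc n → ℝ) (x : Euc n) (P : MPoly n) : Prop :=
  P.totalDegree ≤ m ∧
  ∀ α : Fin n → ℕ, deg α ≤ m → mD α (peval P) x = mD α F x

/-- Truncation of a polynomial: keep the monomials of total degree `≤ d`. -/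
noncomputable def truncLE {n : ℕ} (d : ℕ) (P : MPoly n) : MPoly n :=
  ∑ s ∈ P.support.filter (fun s => (s.sum fun _ e => e) ≤ d),
    MvPolynomial.monomial s (P.coeff s)

/-- Substitution `y ↦ y + v` in a polynomial. -/
noncomputable def polyShift {n : ℕ} (v : Fin n → ℝ) (P : MPoly n) : MPoly n :=
  MvPolynomial.aeval (fun i => (MvPolynomial.X i + MvPolynomial.C (v i) : MPoly n)) P

/-- The `(m-1)`-st order Taylor polynomial of a polynomial `P` at `x`. -/
noncomputable def jetTrunc (m n : ℕ) (x : Euc n) (P : MPoly n) : MPoly n :=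
  polyShift (fun i => -(x i)) (truncLE (m - 1) (polyShift (fun i => x i) P))

/-- Multiplication of `(m-1)`-jets at `x`: `P ⊙_x Q = J_x(PQ)`. -/
noncomputable def jmul (m n : ℕ) (x : Euc n) (P Q : MPoly n) : MPoly n :=
  jetTrunc m n x (P * Q)

/-- `Γ*(x,M)`. -/
def GammaStar (m n : ℕ) (x : Euc n) (M : ℝ) : Set (MPoly n) :=
  {P | ∃ F : Euc n → ℝ, CmNormLe m n F M ∧ (∀ y, 0 ≤ F y) ∧ IsJetAt m n F x P}

/-- `Γ_f(x,M)`. -/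
def GammaF (m n : ℕ) (f : Euc n → ℝ) (x : Euc n) (M : ℝ) : Set (MPoly n) :=
  {P ∈ GammaStar m n x M | peval P x = f x}

/-- `Γ'*(x,M)` (the `C^{m-1,1}` version). -/
def GammaStar' (m n : ℕ) (x : Euc n) (M : ℝ) : Set (MPoly n) :=
  {P | ∃ F : Euc n → ℝ, CmLipNormLe m n F M ∧ (∀ y, 0 ≤ F y) ∧ IsJetAt m n F x P}

/-- `Γ'_f(x,M)`. -/
def GammaF' (m n : ℕ) (f : Euc n → ℝ) (x : Euc n) (M : ℝ) : Set (MPoly n) :=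
  {P ∈ GammaStar' m n x M | peval P x = f x}

/-- `Γ₀⁺`. -/
def Gamma0plus (m n : ℕ) : Set (MPoly n) :=
  {P | P.totalDegree ≤ m ∧
    (∀ β : Fin n → ℕ, deg β ≤ m → |mD β (peval P) 0| ≤ 1) ∧
    (∀ x : Euc n, 0 ≤ peval P x + ‖x‖ ^ m) ∧
    (∀ ε : ℝ, 0 < ε → ∃ δ : ℝ, 0 < δ ∧ ∀ x : Euc n, ‖x‖ ≤ δ → 0 ≤ peval P x + ε * ‖x‖ ^ m)}

/-- `Γ̃₀'`. -/
def GammaTilde0' (m n : ℕ) : Set (MPoly n) :=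
  {P | P.totalDegree ≤ m - 1 ∧
    (∀ β : Fin n → ℕ, deg β ≤ m - 1 → |mD β (peval P) 0| ≤ 1) ∧
    ∀ x : Euc n, 0 ≤ peval P x + ‖x‖ ^ m}

/-- The closed axis-parallel cube with center `c` and sidelength `δ`. -/
def cube {n : ℕ} (c : Euc n) (δ : ℝ) : Set (Euc n) :=
  {y | ∀ i, |y i - c i| ≤ δ / 2}

/-- `F ∈ C^{m-1,1}(Q)` with `‖F‖_{C^{m-1,1}(Q)} ≤ M`, for the cube `Q` of center `c`,
sidelength `δ`. -/
def CmLipOnCubeLe (m n : ℕ) (c : Euc n) (δ : ℝ) (F : Euc n → ℝ) (M : ℝ) : Prop :=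
  ContDiffOn ℝ ((m - 1 : ℕ) : ℕ∞) F (cube c δ) ∧
  (∀ α : Fin n → ℕ, deg α ≤ m - 1 → ∀ x ∈ cube c δ, |mDW (cube c δ) α F x| ≤ M) ∧
  (∀ α : Fin n → ℕ, deg α = m - 1 → ∀ i : Fin n, ∀ x ∈ cube c δ, ∀ t : ℝ,
    x + t • EuclideanSpace.single i (1 : ℝ) ∈ cube c δ →
    |mDW (cube c δ) α F (x + t • EuclideanSpace.single i (1 : ℝ)) - mDW (cube c δ) α F x|
      ≤ M * |t|)

/-! ### Relating `mD` and `iteratedFDeriv` -/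

abbrev ee {n : ℕ} (i : Fin n) : Euc n := EuclideanSpace.single i (1 : ℝ)

theorem contDiff_pD {n k : ℕ} {F : Euc n → ℝ} (hF : ContDiff ℝ (k + 1 : ℕ) F) (i : Fin n) :
    ContDiff ℝ (k : ℕ) (pD i F) := by
  have h : ContDiff ℝ (k : ℕ) (fderiv ℝ F) := hF.fderiv_right (by norm_cast)
  exact h.clm_apply contDiff_const

theorem contDiff_foldr {n : ℕ} (l : List (Fin n)) {k : ℕ} {F : Euc n → ℝ}
    (hF : ContDiff ℝ (k + l.length : ℕ) F) : ContDiff ℝ (k : ℕ) (l.foldr pD F) := by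
  induction l generalizing k with
  | nil => simpa using hF
  | cons a l ih =>
    rw [List.foldr_cons]
    apply contDiff_pD
    apply ih
    convert hF using 2
    simp only [List.length_cons]
    omega

theorem pD_comm {n : ℕ} {F : Euc n → ℝ} (hF : ContDiff ℝ (2 : ℕ) F) (i j : Fin n) :
    pD i (pD j F) = pD j (pD i F) := by
  funext x
  have hs : IsSymmSndFDerivAt ℝ F x :=
    hF.contDiffAt.isSymmSndFDerivAt (by simp)
  have hd : Differentiable ℝ (fderiv ℝ F) :=
    (hF.fderiv_right (m := 1) (by norm_num)).differentiable (by norm_num)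
  have key : ∀ a b : Fin n, pD a (pD b F) x = fderiv ℝ (fderiv ℝ F) x (ee a) (ee b) := by
    intro a b
    unfold pD
    rw [fderiv_clm_apply (hd x) (differentiableAt_const _)]
    simp
  rw [key, key]
  exact hs _ _

theorem foldr_perm {n : ℕ} {l₁ l₂ : List (Fin n)} (h : l₁.Perm l₂) {F : Euc n → ℝ}
    (hF : ContDiff ℝ (l₁.length : ℕ) F) : l₁.foldr pD F = l₂.foldr pD F := by
  induction h with
  | nil => rfl
  | cons a h ih =>
    rw [List.foldr_cons, List.foldr_cons, ih]
    exact hF.of_le (by simp)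
  | swap a b l =>
    simp only [List.foldr_cons]
    apply pD_comm
    apply contDiff_foldr
    convert hF using 2
    simp only [List.length_cons]
    omega
  | trans h1 h2 ih1 ih2 =>
    rw [ih1 hF, ih2]
    rwa [← h1.length_eq]

theorem foldr_eq_iteratedFDeriv {n : ℕ} (l : List (Fin n)) {F : Euc n → ℝ}
    (hF : ContDiff ℝ (l.length : ℕ) F) (x : Euc n) :
    l.foldr pD F x = iteratedFDeriv ℝ l.length F x (fun i => ee (l.get i)) := by
  induction l generalizing x with
  | nil => simp
  | cons a l ih =>
    rw [List.foldr_cons]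
    have h1 : l.foldr pD F = fun y => iteratedFDeriv ℝ l.length F y (fun i => ee (l.get i)) := by
      funext y
      exact ih (hF.of_le (by simp)) y
    have hd : DifferentiableAt ℝ (iteratedFDeriv ℝ l.length F) x :=
      (hF.differentiable_iteratedFDeriv (by
        simp only [List.length_cons]; norm_cast; omega)) x
    rw [h1]
    simp only [List.length_cons]
    rw [iteratedFDeriv_succ_apply_left]
    unfold pD
    rw [fderiv_continuousMultilinear_apply_const_apply hd]
    rfl

/-- The sorted list of a multi-index. -/
def mlist {n : ℕ} (α : Fin n → ℕ) : List (Fin n) :=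
  (List.finRange n).flatMap fun i => List.replicate (α i) i

theorem mlist_length {n : ℕ} (α : Fin n → ℕ) : (mlist α).length = deg α := by
  unfold mlist deg
  simp [List.length_flatMap, Fin.sum_univ_def]

theorem mlist_count {n : ℕ} (α : Fin n → ℕ) (i : Fin n) : (mlist α).count i = α i := by
  unfold mlist
  rw [List.count_flatMap]
  have : (List.count i ∘ fun j => List.replicate (α j) j) = fun j => if j = i then α j else 0 := by
    funext j
    simp [List.count_replicate]
  rw [this, ← Fin.sum_univ_def]
  simp

theorem mD_eq {n : ℕ} (α : Fin n → ℕ) {F : Euc n → ℝ}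
    (hF : ContDiff ℝ (deg α : ℕ) F) (x : Euc n) :
    mD α F x = iteratedFDeriv ℝ (mlist α).length F x (fun i => ee ((mlist α).get i)) := by
  rw [← foldr_eq_iteratedFDeriv]
  · rfl
  · rwa [mlist_length]

theorem mD_linear {n : ℕ} (α : Fin n → ℕ) {F G : Euc n → ℝ} (a b : ℝ)
    (hF : ContDiff ℝ (deg α : ℕ) F) (hG : ContDiff ℝ (deg α : ℕ) G) (x : Euc n) :
    mD α (fun y => a * F y + b * G y) x = a * mD α F x + b * mD α G x := by
  rw [mD_eq α hF, mD_eq α hG, mD_eq]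
  · rw [← mlist_length] at hF hG
    have h1 : (fun y => a * F y + b * G y) = (a • F) + (b • G) := by
      funext y; simp
    rw [h1, iteratedFDeriv_add_apply, iteratedFDeriv_const_smul_apply,
      iteratedFDeriv_const_smul_apply]
    · simp
    · exact hG.contDiffAt
    · exact hF.contDiffAt
    · exact (contDiff_const.smul hF).contDiffAt
    · exact (contDiff_const.smul hG).contDiffAt
  · exact (contDiff_const.mul hF).add (contDiff_const.mul hG)

theorem mD_sub {n : ℕ} (α : Fin n → ℕ) {F G : Euc n → ℝ}
    (hF : ContDiff ℝ (deg α : ℕ) F) (hG : ContDiff ℝ (deg α : ℕ) G) (x : Euc n) :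
    mD α (fun y => F y - G y) x = mD α F x - mD α G x := by
  have := mD_linear α 1 (-1) hF hG x
  simpa [sub_eq_add_neg] using this

theorem abs_mD_le {n : ℕ} (α : Fin n → ℕ) {F : Euc n → ℝ}
    (hF : ContDiff ℝ (deg α : ℕ) F) (x : Euc n) :
    |mD α F x| ≤ ‖iteratedFDeriv ℝ (deg α) F x‖ := by
  rw [mD_eq α hF, ← mlist_length, ← Real.norm_eq_abs]
  refine (ContinuousMultilinearMap.le_opNorm _ _).trans ?_
  simp

theorem norm_iteratedFDeriv_le_of_mD {n : ℕ} {j : ℕ} {F : Euc n → ℝ}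
    (hF : ContDiff ℝ (j : ℕ) F) (x : Euc n) (B : ℝ) (hB : 0 ≤ B)
    (h : ∀ α : Fin n → ℕ, deg α = j → |mD α F x| ≤ B) :
    ‖iteratedFDeriv ℝ j F x‖ ≤ (n : ℝ) ^ j * B := by
  have h1 : ∀ r : Fin j → Fin n, |iteratedFDeriv ℝ j F x (fun i => ee (r i))| ≤ B := by
    intro r
    set l := List.ofFn r with hl
    set α : Fin n → ℕ := fun i => l.count i with hα
    have hp : l.Perm (mlist α) := by
      rw [List.perm_iff_count]
      intro a
      rw [mlist_count]
    have hlen : l.length = j := by simp [hl]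
    have hdeg : deg α = j := by rw [← mlist_length, ← hp.length_eq, hlen]
    have h2 := h α hdeg
    have h3 : mD α F = l.foldr pD F := (foldr_perm hp (by rwa [hlen])).symm
    rw [h3, foldr_eq_iteratedFDeriv l (by rwa [hlen])] at h2
    convert h2 using 2
    clear_value α
    have : ∀ (k : ℕ) (hk : k = j) (v : Fin k → Euc n) (w : Fin j → Euc n),
        (∀ i : Fin k, v i = w (Fin.cast hk i)) →
        iteratedFDeriv ℝ j F x w = iteratedFDeriv ℝ k F x v := by
      intro k hk v w hvw
      subst hk
      congr 1
      funext i
      exact (hvw i).symm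
    apply this _ hlen
    intro i
    simp [hl]
    rfl
  apply ContinuousMultilinearMap.opNorm_le_bound (by positivity)
  intro v
  have hv : v = fun i => ∑ r : Fin n, (v i r) • ee r := by
    funext i
    ext k
    simp [ee, Pi.single_apply]
  have h2 : iteratedFDeriv ℝ j F x v =
      ∑ r : Fin j → Fin n, (∏ i, v i (r i)) * iteratedFDeriv ℝ j F x (fun i => ee (r i)) := by
    conv_lhs => rw [hv]
    rw [ContinuousMultilinearMap.map_sum]
    apply Finset.sum_congr rfl
    intro r _
    rw [ContinuousMultilinearMap.map_smul_univ]
    simp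
  rw [h2]
  calc ‖∑ r : Fin j → Fin n, (∏ i, v i (r i)) * iteratedFDeriv ℝ j F x (fun i => ee (r i))‖
      ≤ ∑ r : Fin j → Fin n, (∏ i, ‖v i‖) * B := by
        apply norm_sum_le_of_le
        intro r _
        rw [norm_mul, norm_prod]
        apply mul_le_mul _ (h1 r) (abs_nonneg _) (by positivity)
        apply Finset.prod_le_prod
        · intros; positivity
        · intro i _
          exact PiLp.norm_apply_le _ _
    _ = (n : ℝ) ^ j * B * ∏ i, ‖v i‖ := by
        simp; ring

/-! ### Vanishing order -/

/-- All derivatives of order `< k` vanish at `x`. -/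
def Van {n : ℕ} (f : Euc n → ℝ) (x : Euc n) (k : ℕ) : Prop :=
  ∀ j < k, iteratedFDeriv ℝ j f x = 0

/-- All derivatives of order `> d` vanish identically. -/
def HiZero {n : ℕ} (f : Euc n → ℝ) (d : ℕ) : Prop :=
  ∀ j, d < j → ∀ y, iteratedFDeriv ℝ j f y = 0

theorem Van.mul {n : ℕ} {f g : Euc n → ℝ} {x : Euc n} {a b N : ℕ}
    (hf : ContDiff ℝ N f) (hg : ContDiff ℝ N g) (hN : a + b ≤ N)
    (h1 : Van f x a) (h2 : Van g x b) : Van (fun y => f y * g y) x (a + b) := by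
  intro j hj
  rw [← norm_le_zero_iff]
  refine (norm_iteratedFDeriv_mul_le hf hg x (by norm_cast; omega)).trans ?_
  apply le_of_eq
  apply Finset.sum_eq_zero
  intro i hi
  rw [Finset.mem_range] at hi
  by_cases hia : i < a
  · rw [h1 i hia]; simp
  · rw [h2 (j - i) (by omega)]; simp

theorem HiZero.mul {n : ℕ} {f g : Euc n → ℝ} {a b : ℕ}
    (hf : ∀ N : ℕ, ContDiff ℝ N f) (hg : ∀ N : ℕ, ContDiff ℝ N g)
    (h1 : HiZero f a) (h2 : HiZero g b) : HiZero (fun y => f y * g y) (a + b) := by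
  intro j hj y
  rw [← norm_le_zero_iff]
  refine (norm_iteratedFDeriv_mul_le (hf j) (hg j) y le_rfl).trans ?_
  apply le_of_eq
  apply Finset.sum_eq_zero
  intro i hi
  by_cases hia : a < i
  · rw [h1 i hia]; simp
  · rw [h2 (j - i) (by omega)]; simp

theorem Van.add {n : ℕ} {f g : Euc n → ℝ} {x : Euc n} {a : ℕ}
    (hf : ContDiff ℝ a f) (hg : ContDiff ℝ a g)
    (h1 : Van f x a) (h2 : Van g x a) : Van (fun y => f y + g y) x a := by
  intro j hj
  have := iteratedFDeriv_add_apply (i := j) (f := f) (g := g) (x := x)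
    (hf.of_le (by norm_cast; omega)).contDiffAt (hg.of_le (by norm_cast; omega)).contDiffAt
  change iteratedFDeriv ℝ j (f + g) x = 0
  rw [this, h1 j hj, h2 j hj, add_zero]

theorem HiZero.add {n : ℕ} {f g : Euc n → ℝ} {a : ℕ}
    (hf : ∀ N : ℕ, ContDiff ℝ N f) (hg : ∀ N : ℕ, ContDiff ℝ N g)
    (h1 : HiZero f a) (h2 : HiZero g a) : HiZero (fun y => f y + g y) a := by
  intro j hj y
  have := iteratedFDeriv_add_apply (i := j) (f := f) (g := g) (x := y)
    (hf j).contDiffAt (hg j).contDiffAt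
  change iteratedFDeriv ℝ j (f + g) y = 0
  rw [this, h1 j hj, h2 j hj, add_zero]

theorem HiZero.mono {n : ℕ} {f : Euc n → ℝ} {a b : ℕ} (hab : a ≤ b)
    (h1 : HiZero f a) : HiZero f b := fun j hj y => h1 j (by omega) y

theorem Van.mono {n : ℕ} {f : Euc n → ℝ} {x : Euc n} {a b : ℕ} (hab : a ≤ b)
    (h1 : Van f x b) : Van f x a := fun j hj => h1 j (by omega)

theorem HiZero.const {n : ℕ} (c : ℝ) : HiZero (fun _ : Euc n => c) 0 := by
  intro j hj y
  rw [iteratedFDeriv_const_of_ne (by omega)]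
  rfl

theorem Van.zero_order {n : ℕ} (f : Euc n → ℝ) (x : Euc n) : Van f x 0 := by
  intro j hj; omega

theorem Van.zero {n : ℕ} (x : Euc n) (k : ℕ) : Van (fun _ : Euc n => (0 : ℝ)) x k := by
  intro j hj
  have : (fun _ : Euc n => (0 : ℝ)) = 0 := rfl
  rw [this, iteratedFDeriv_zero]
  rfl

/-! ### Polynomials -/

theorem contDiff_coord {n : ℕ} (i : Fin n) (N : ℕ) : ContDiff ℝ N (fun y : Euc n => y i) :=
  (EuclideanSpace.proj i : Euc n →L[ℝ] ℝ).contDiff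

theorem HiZero.coord {n : ℕ} (i : Fin n) : HiZero (fun y : Euc n => y i) 1 := by
  intro j hj y
  obtain ⟨k, rfl⟩ : ∃ k, j = k + 1 := ⟨j - 1, by omega⟩
  rw [← norm_eq_zero, ← norm_iteratedFDeriv_fderiv]
  have : fderiv ℝ (fun y : Euc n => y i) =
      fun _ => (EuclideanSpace.proj i : Euc n →L[ℝ] ℝ) := by
    funext z
    exact (EuclideanSpace.proj i : Euc n →L[ℝ] ℝ).fderiv
  rw [this, iteratedFDeriv_const_of_ne (by omega)]
  simp

theorem Van.coord {n : ℕ} (i : Fin n) : Van (fun y : Euc n => y i) 0 1 := by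
  intro j hj
  obtain rfl : j = 0 := by omega
  ext v
  simp

theorem van_pow {n : ℕ} (i : Fin n) (k : ℕ) : Van (fun y : Euc n => y i ^ k) 0 k := by
  induction k with
  | zero => exact Van.zero_order _ _
  | succ k ih =>
    simp only [pow_succ]
    exact Van.mul (N := k + 1) ((contDiff_coord i _).pow k) (contDiff_coord i _) le_rfl ih
      (Van.coord i)

theorem hiZero_pow {n : ℕ} (i : Fin n) (k : ℕ) : HiZero (fun y : Euc n => y i ^ k) k := by
  induction k with
  | zero => simpa using HiZero.const (n := n) 1
  | succ k ih =>
    simp only [pow_succ]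
    exact HiZero.mul (fun N => (contDiff_coord i _).pow k) (fun N => contDiff_coord i _) ih
      (HiZero.coord i)

theorem contDiff_prod_pow {n : ℕ} (s : Fin n → ℕ) (t : Finset (Fin n)) (N : ℕ) :
    ContDiff ℝ N (fun y : Euc n => ∏ i ∈ t, y i ^ s i) :=
  contDiff_prod fun i _ => (contDiff_coord i _).pow _

theorem van_prod {n : ℕ} (s : Fin n → ℕ) (t : Finset (Fin n)) :
    Van (fun y : Euc n => ∏ i ∈ t, y i ^ s i) 0 (∑ i ∈ t, s i) := by
  classical
  induction t using Finset.induction_on with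
  | empty => exact Van.zero_order _ _
  | insert a t ha ih =>
    simp only [Finset.prod_insert ha, Finset.sum_insert ha]
    exact Van.mul (N := s a + ∑ i ∈ t, s i) ((contDiff_coord a _).pow _) (contDiff_prod_pow s t _)
      le_rfl (van_pow a _) ih

theorem hiZero_prod {n : ℕ} (s : Fin n → ℕ) (t : Finset (Fin n)) :
    HiZero (fun y : Euc n => ∏ i ∈ t, y i ^ s i) (∑ i ∈ t, s i) := by
  classical
  induction t using Finset.induction_on with
  | empty => simpa using HiZero.const (n := n) 1
  | insert a t ha ih =>
    simp only [Finset.prod_insert ha, Finset.sum_insert ha]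
    exact HiZero.mul (fun N => (contDiff_coord a _).pow _) (fun N => contDiff_prod_pow s t _)
      (hiZero_pow a _) ih

theorem peval_monomial {n : ℕ} (s : Fin n →₀ ℕ) (c : ℝ) :
    peval (MvPolynomial.monomial s c) = fun y : Euc n => c * ∏ i, y i ^ s i := by
  funext y
  unfold peval
  rw [MvPolynomial.eval_monomial, Finsupp.prod_fintype]
  simp

theorem peval_add {n : ℕ} (P Q : MPoly n) :
    peval (P + Q) = fun y => peval P y + peval Q y := by
  funext y; simp [peval]

theorem peval_sub {n : ℕ} (P Q : MPoly n) :
    peval (P - Q) = fun y => peval P y - peval Q y := by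
  funext y; simp [peval]

theorem peval_mul {n : ℕ} (P Q : MPoly n) :
    peval (P * Q) = fun y => peval P y * peval Q y := by
  funext y; simp [peval]

theorem contDiff_peval {n : ℕ} (P : MPoly n) (N : ℕ) : ContDiff ℝ N (peval P) := by
  induction P using MvPolynomial.induction_on' with
  | monomial s c =>
    rw [peval_monomial]
    exact contDiff_const.mul (contDiff_prod_pow s _ N)
  | add P Q hP hQ =>
    rw [peval_add]
    exact hP.add hQ

theorem sum_eq_finsupp {n : ℕ} (s : Fin n →₀ ℕ) : (s.sum fun _ e => e) = ∑ i, s i :=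
  Finsupp.sum_fintype _ _ (fun _ => rfl)

theorem hiZero_peval {n : ℕ} (P : MPoly n) : HiZero (peval P) P.totalDegree := by
  classical
  have key : ∀ T : Finset (Fin n →₀ ℕ), (∀ s ∈ T, (s.sum fun _ e => e) ≤ P.totalDegree) →
      HiZero (peval (∑ s ∈ T, MvPolynomial.monomial s (P.coeff s))) P.totalDegree := by
    intro T
    induction T using Finset.induction_on with
    | empty =>
      intro _
      have : peval (n := n) 0 = fun _ => 0 := by funext y; simp [peval]
      simp only [Finset.sum_empty]
      rw [this]
      exact (HiZero.const 0).mono (by omega)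
    | insert a T ha ih =>
      intro h
      rw [Finset.sum_insert ha, peval_add]
      refine HiZero.add (contDiff_peval _) (contDiff_peval _) ?_
        (ih fun s hs => h s (Finset.mem_insert_of_mem hs))
      rw [peval_monomial]
      have h2 := h a (Finset.mem_insert_self _ _)
      rw [sum_eq_finsupp] at h2
      refine HiZero.mono (a := 0 + ∑ i, a i) (by simpa using h2) ?_
      exact HiZero.mul (fun N => contDiff_const) (fun N => contDiff_prod_pow _ _ N)
        (HiZero.const _) (hiZero_prod _ _)
  have := key P.support (fun s hs => MvPolynomial.le_totalDegree hs)
  rwa [← MvPolynomial.as_sum] at this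

theorem van_truncLE {n : ℕ} (d : ℕ) (P : MPoly n) :
    Van (fun y => peval P y - peval (truncLE d P) y) 0 (d + 1) := by
  classical
  have key : ∀ T : Finset (Fin n →₀ ℕ), (∀ s ∈ T, d < (s.sum fun _ e => e)) →
      Van (peval (∑ s ∈ T, MvPolynomial.monomial s (P.coeff s))) 0 (d + 1) := by
    intro T
    induction T using Finset.induction_on with
    | empty =>
      intro _
      have : peval (n := n) 0 = fun _ => 0 := by funext y; simp [peval]
      simp only [Finset.sum_empty]
      rw [this]
      exact Van.zero _ _
    | insert a T ha ih =>
      intro h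
      rw [Finset.sum_insert ha, peval_add]
      refine Van.add (contDiff_peval _ _) (contDiff_peval _ _) ?_
        (ih fun s hs => h s (Finset.mem_insert_of_mem hs))
      rw [peval_monomial]
      have h2 := h a (Finset.mem_insert_self _ _)
      rw [sum_eq_finsupp] at h2
      refine Van.mono (b := 0 + ∑ i, a i) (by omega) ?_
      exact Van.mul (N := 0 + ∑ i, a i) contDiff_const (contDiff_prod_pow _ _ _) le_rfl
        (Van.zero_order _ _) (van_prod _ _)
  have := key (P.support.filter fun s => ¬ (s.sum fun _ e => e) ≤ d) (by
    intro s hs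
    rw [Finset.mem_filter] at hs
    omega)
  rw [← peval_sub]
  convert this using 2
  unfold truncLE
  rw [sub_eq_iff_eq_add, add_comm, Finset.sum_filter_add_sum_filter_not]
  exact MvPolynomial.as_sum P

theorem peval_polyShift {n : ℕ} (v : Fin n → ℝ) (P : MPoly n) (y : Euc n) :
    peval (polyShift v P) y = MvPolynomial.eval (fun i => y i + v i) P := by
  unfold peval polyShift
  induction P using MvPolynomial.induction_on with
  | C a => simp
  | add p q hp hq => simp only [map_add, hp, hq]
  | mul_X p i hp => simp only [map_mul, hp]; simp

theorem van_jetTrunc {m n : ℕ} (hm : 0 < m) (x : Euc n) (P : MPoly n) :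
    Van (fun y => peval P y - peval (jetTrunc m n x P) y) x m := by
  intro j hj
  have h := van_truncLE (m - 1) (polyShift (fun i => x i) P) j (by omega)
  have h2 : (fun y => peval P y - peval (jetTrunc m n x P) y) = fun y =>
      (fun z => peval (polyShift (fun i => x i) P) z -
        peval (truncLE (m - 1) (polyShift (fun i => x i) P)) z) (y - x) := by
    funext y
    unfold jetTrunc
    simp only [peval_polyShift]
    simp [peval, sub_eq_add_neg]
  rw [h2]
  refine (iteratedFDeriv_comp_sub (𝕜 := ℝ) (f := fun z => peval (polyShift (fun i => x i) P) z -
        peval (truncLE (m - 1) (polyShift (fun i => x i) P)) z) j x x).trans ?_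
  rw [sub_self]
  exact h

theorem totalDegree_polyShift {n : ℕ} (v : Fin n → ℝ) (P : MPoly n) :
    (polyShift v P).totalDegree ≤ P.totalDegree := by
  unfold polyShift
  rw [MvPolynomial.aeval_def, MvPolynomial.eval₂_eq']
  apply MvPolynomial.totalDegree_finsetSum_le
  intro s hs
  have h1 : (∏ i, (MvPolynomial.X i + MvPolynomial.C (v i) : MPoly n) ^ s i).totalDegree
      ≤ ∑ i, s i := by
    refine (MvPolynomial.totalDegree_finsetProd _ _).trans ?_
    apply Finset.sum_le_sum
    intro i _
    refine (MvPolynomial.totalDegree_pow _ _).trans ?_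
    have : (MvPolynomial.X i + MvPolynomial.C (v i) : MPoly n).totalDegree ≤ 1 := by
      refine (MvPolynomial.totalDegree_add _ _).trans ?_
      simp
    nlinarith [Nat.zero_le (s i)]
  have h2 := MvPolynomial.le_totalDegree hs
  rw [sum_eq_finsupp] at h2
  refine (MvPolynomial.totalDegree_mul _ _).trans ?_
  have h3 : ((algebraMap ℝ (MPoly n)) (MvPolynomial.coeff s P)).totalDegree = 0 :=
    MvPolynomial.totalDegree_C _
  rw [h3]
  omega

theorem totalDegree_truncLE {n : ℕ} (d : ℕ) (P : MPoly n) : (truncLE d P).totalDegree ≤ d := by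
  unfold truncLE
  apply MvPolynomial.totalDegree_finsetSum_le
  intro s hs
  rw [Finset.mem_filter] at hs
  exact (MvPolynomial.totalDegree_monomial_le _ _).trans hs.2

theorem totalDegree_jmul {m n : ℕ} (x : Euc n) (P Q : MPoly n) :
    (jmul m n x P Q).totalDegree ≤ m - 1 :=
  (totalDegree_polyShift _ _).trans (totalDegree_truncLE _ _)

/-! ### Analytic estimates -/

theorem Van.eval_eq {n k : ℕ} {f : Euc n → ℝ} {x : Euc n} (hk : 0 < k) (h : Van f x k) :
    f x = 0 := by
  have h0 := h 0 hk
  rw [← norm_eq_zero, norm_iteratedFDeriv_zero, norm_eq_zero] at h0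
  exact h0

theorem Van.mulLeft {n k : ℕ} {f g : Euc n → ℝ} {x : Euc n}
    (hg : ContDiff ℝ k g) (hf : ContDiff ℝ k f) (h : Van f x k) :
    Van (fun y => g y * f y) x k := by
  have := Van.mul (a := 0) (b := k) hg hf (by omega) (Van.zero_order g x) h
  simpa using this

theorem mul_bound {n m : ℕ} {f g : Euc n → ℝ} {y : Euc n} {A B ρ : ℝ}
    (hA : 0 ≤ A) (hB : 0 ≤ B) (hρ : 0 ≤ ρ)
    (hf : ContDiff ℝ m f) (hg : ContDiff ℝ m g)
    (h1 : ∀ j ≤ m, ‖iteratedFDeriv ℝ j f y‖ ≤ A * ρ ^ j)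
    (h2 : ∀ j ≤ m, ‖iteratedFDeriv ℝ j g y‖ ≤ B * ρ ^ j) :
    ∀ j ≤ m, ‖iteratedFDeriv ℝ j (fun z => f z * g z) y‖ ≤ (2 ^ m * A * B) * ρ ^ j := by
  intro j hj
  refine (norm_iteratedFDeriv_mul_le hf hg y (by exact_mod_cast hj)).trans ?_
  calc ∑ i ∈ Finset.range (j + 1), (j.choose i : ℝ) * ‖iteratedFDeriv ℝ i f y‖ *
        ‖iteratedFDeriv ℝ (j - i) g y‖
      ≤ ∑ i ∈ Finset.range (j + 1), (j.choose i : ℝ) * (A * B * ρ ^ j) := by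
        apply Finset.sum_le_sum
        intro i hi
        rw [Finset.mem_range] at hi
        rw [mul_assoc]
        apply mul_le_mul_of_nonneg_left _ (by positivity)
        calc ‖iteratedFDeriv ℝ i f y‖ * ‖iteratedFDeriv ℝ (j - i) g y‖
            ≤ (A * ρ ^ i) * (B * ρ ^ (j - i)) :=
              mul_le_mul (h1 i (by omega)) (h2 _ (by omega)) (norm_nonneg _) (by positivity)
          _ = A * B * (ρ ^ i * ρ ^ (j - i)) := by ring
          _ = A * B * ρ ^ j := by rw [← pow_add]; congr 2; omega
    _ = 2 ^ j * (A * B * ρ ^ j) := by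
        rw [← Finset.sum_mul]
        congr 1
        exact_mod_cast Nat.sum_range_choose j
    _ ≤ 2 ^ m * (A * B * ρ ^ j) := by
        apply mul_le_mul_of_nonneg_right _ (by positivity)
        exact pow_le_pow_right₀ (by norm_num) hj
    _ = _ := by ring

theorem taylor_bound {n m : ℕ} {f : Euc n → ℝ} {x : Euc n} {B δ : ℝ} (hB : 0 ≤ B) (hδ : 0 < δ)
    (hf : ContDiff ℝ m f)
    (h1 : ∀ j < m, ‖iteratedFDeriv ℝ j f x‖ ≤ B * δ⁻¹ ^ j)
    (h2 : ∀ y ∈ Metric.closedBall x δ, ‖iteratedFDeriv ℝ m f y‖ ≤ B * δ⁻¹ ^ m) :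
    ∀ y ∈ Metric.closedBall x δ, ∀ j ≤ m,
      ‖iteratedFDeriv ℝ j f y‖ ≤ (B * (m + 1)) * δ⁻¹ ^ j := by
  have key : ∀ i : ℕ, ∀ j : ℕ, j + i = m → ∀ y ∈ Metric.closedBall x δ,
      ‖iteratedFDeriv ℝ j f y‖ ≤ (B * (i + 1)) * δ⁻¹ ^ j := by
    intro i
    induction i with
    | zero =>
      intro j hj y hy
      obtain rfl : j = m := by omega
      simpa using h2 y hy
    | succ i ih =>
      intro j hj y hy
      have h3 := ih (j + 1) (by omega)
      have hx : x ∈ Metric.closedBall x δ := Metric.mem_closedBall_self hδ.le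
      have hmv := (convex_closedBall x δ).norm_image_sub_le_of_norm_fderiv_le (𝕜 := ℝ)
        (f := iteratedFDeriv ℝ j f) (C := (B * (i + 1)) * δ⁻¹ ^ (j + 1))
        (fun z _ => hf.differentiable_iteratedFDeriv (by norm_cast; omega) z)
        (fun z hz => by rw [norm_fderiv_iteratedFDeriv]; exact h3 z hz) hx hy
      have hd : ‖y - x‖ ≤ δ := by rwa [← dist_eq_norm]
      have h4 : (B * (i + 1)) * δ⁻¹ ^ (j + 1) * ‖y - x‖ ≤ (B * (i + 1)) * δ⁻¹ ^ j := by
        calc (B * (i + 1)) * δ⁻¹ ^ (j + 1) * ‖y - x‖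
            ≤ (B * (i + 1)) * δ⁻¹ ^ (j + 1) * δ :=
              mul_le_mul_of_nonneg_left hd (by positivity)
          _ = (B * (i + 1)) * δ⁻¹ ^ j := by
              rw [pow_succ]; field_simp
      have h5 := norm_sub_norm_le (iteratedFDeriv ℝ j f y) (iteratedFDeriv ℝ j f x)
      have h6 := h1 j (by omega)
      push_cast
      calc ‖iteratedFDeriv ℝ j f y‖ ≤ B * δ⁻¹ ^ j + (B * (i + 1)) * δ⁻¹ ^ j := by linarith
        _ = _ := by ring
  intro y hy j hj
  refine (key (m - j) j (by omega) y hy).trans ?_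
  apply mul_le_mul_of_nonneg_right _ (by positivity)
  apply mul_le_mul_of_nonneg_left _ hB
  have : ((m - j : ℕ) : ℝ) ≤ m := by exact_mod_cast Nat.sub_le _ _
  linarith

theorem exists_cutoff (m n : ℕ) (c : ℝ) (hc : 0 < c) (hc1 : c ≤ 1) :
    ∃ K : ℝ, 0 ≤ K ∧ ∀ (x : Euc n) (δ : ℝ), 0 < δ → ∃ χ : Euc n → ℝ,
      (∀ N : ℕ, ContDiff ℝ N χ) ∧ (∀ y, 0 ≤ χ y ∧ χ y ≤ 1) ∧
      (∀ y, c * δ ≤ ‖y - x‖ → χ y = 0) ∧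
      (∀ y, δ < ‖y - x‖ → ∀ j, iteratedFDeriv ℝ j χ y = 0) ∧
      (∀ y, ∀ j ≤ m, ‖iteratedFDeriv ℝ j χ y‖ ≤ K * δ⁻¹ ^ j) ∧
      Van (fun y => χ y - 1) x m := by
  let χ₀ : ContDiffBump (0 : Euc n) := ⟨c / 2, c, by positivity, by linarith⟩
  have hsm : ∀ N : ℕ, ContDiff ℝ N χ₀ := fun N => χ₀.contDiff
  have hK : ∀ j : ℕ, ∃ K : ℝ, ∀ z, ‖iteratedFDeriv ℝ j χ₀ z‖ ≤ K := by
    intro j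
    exact ((χ₀.hasCompactSupport.iteratedFDeriv (𝕜 := ℝ) j)).exists_bound_of_continuous
      ((hsm j).continuous_iteratedFDeriv le_rfl)
  choose K hK using hK
  have hK0 : ∀ j, 0 ≤ K j := fun j => (norm_nonneg _).trans (hK j 0)
  refine ⟨∑ j ∈ Finset.range (m + 1), K j, Finset.sum_nonneg fun j _ => hK0 j, ?_⟩
  intro x δ hδ
  have hD : ∀ j y, iteratedFDeriv ℝ j (fun y => χ₀ (δ⁻¹ • (y - x))) y =
      δ⁻¹ ^ j • iteratedFDeriv ℝ j χ₀ (δ⁻¹ • (y - x)) := by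
    intro j y
    refine (iteratedFDeriv_comp_sub (𝕜 := ℝ) (f := fun z => χ₀ (δ⁻¹ • z)) j x y).trans ?_
    rw [iteratedFDeriv_comp_const_smul _ (hsm j)]
  have hnorm : ∀ y : Euc n, ‖δ⁻¹ • (y - x)‖ = δ⁻¹ * ‖y - x‖ := by
    intro y
    rw [norm_smul, Real.norm_of_nonneg (by positivity)]
  refine ⟨fun y => χ₀ (δ⁻¹ • (y - x)), ?_, ?_, ?_, ?_, ?_, ?_⟩
  · intro N
    have h : ContDiff ℝ N (fun y : Euc n => δ⁻¹ • (y - x)) :=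
      (contDiff_id.sub contDiff_const).const_smul _
    exact (hsm N).comp h
  · intro y
    exact ⟨χ₀.nonneg, χ₀.le_one⟩
  · intro y hy
    apply χ₀.zero_of_le_dist
    rw [dist_zero_right, hnorm]
    change c ≤ _
    rw [inv_mul_eq_div, le_div_iff₀ hδ]
    exact hy
  · intro y hy j
    rw [hD]
    have : iteratedFDeriv ℝ j χ₀ (δ⁻¹ • (y - x)) = 0 := by
      by_contra hne
      have h1 := support_iteratedFDeriv_subset (𝕜 := ℝ) (f := χ₀) j hne
      rw [χ₀.tsupport_eq, Metric.mem_closedBall, dist_zero_right, hnorm] at h1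
      change _ ≤ c at h1
      rw [inv_mul_eq_div, div_le_iff₀ hδ] at h1
      nlinarith
    rw [this, smul_zero]
  · intro y j hj
    rw [hD, norm_smul, norm_pow, Real.norm_of_nonneg (by positivity), mul_comm]
    apply mul_le_mul_of_nonneg_right _ (by positivity)
    refine (hK j _).trans ?_
    exact Finset.single_le_sum (f := K) (fun i _ => hK0 i) (by simp; omega)
  · intro j hj
    have hev : (fun y => χ₀ (δ⁻¹ • (y - x)) - 1) =ᶠ[nhds x] fun _ => 0 := by
      have : Metric.ball x (δ * (c / 2)) ∈ nhds x := Metric.ball_mem_nhds _ (by positivity)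
      filter_upwards [this] with y hy
      rw [Metric.mem_ball, dist_eq_norm] at hy
      have : χ₀ (δ⁻¹ • (y - x)) = 1 := by
        apply χ₀.one_of_mem_closedBall
        rw [Metric.mem_closedBall, dist_zero_right, hnorm]
        change _ ≤ c / 2
        rw [inv_mul_eq_div, div_le_iff₀ hδ]
        linarith
      rw [this, sub_self]
    rw [(Filter.EventuallyEq.iteratedFDeriv ℝ hev j).self_of_nhds]
    exact Van.zero x m j hj

theorem key_lemma (m n : ℕ) (hm : 0 < m) (hn : 0 < n) :
    ∃ C : ℝ, 0 < C ∧ ∀ (x : Euc n) (M δ : ℝ), 0 < M → 0 < δ → δ ≤ 1 →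
      ∀ F₁ F₂ : Euc n → ℝ, CmNormLe m n F₁ M → CmNormLe m n F₂ M →
      (∀ y, 0 ≤ F₁ y) → (∀ y, 0 ≤ F₂ y) →
      (∀ β : Fin n → ℕ, deg β ≤ m - 1 →
        |mD β F₁ x - mD β F₂ x| ≤ M * δ ^ (m - deg β)) →
      ∀ Q : MPoly n, Q.totalDegree ≤ m - 1 →
      (∀ β : Fin n → ℕ, deg β ≤ m - 1 → |mD β (peval Q) x| ≤ δ ^ (-(deg β : ℤ))) →
      peval Q x ^ 2 ≤ 1 / 2 →
      ∃ F : Euc n → ℝ, CmNormLe m n F (C * M) ∧ (∀ y, 0 ≤ F y) ∧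
        Van (fun y => F y - (F₂ y + peval Q y * peval Q y * (F₁ y - F₂ y))) x m := by
  have hn1 : (1 : ℝ) ≤ n := by exact_mod_cast hn
  set A : ℝ := (n : ℝ) ^ m with hA
  have hA1 : 1 ≤ A := one_le_pow₀ hn1
  have hAj : ∀ j ≤ m, (n : ℝ) ^ j ≤ A := fun j hj => pow_le_pow_right₀ hn1 hj
  set BQ : ℝ := A * (m + 1) with hBQ
  have hBQ1 : 1 ≤ BQ := by
    have : (0 : ℝ) ≤ m := by positivity
    nlinarith
  set c : ℝ := 1 / (4 * BQ) with hc
  have hc0 : 0 < c := by positivity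
  have hc1 : c ≤ 1 := by
    rw [hc, div_le_one (by positivity)]; linarith
  obtain ⟨K, hK0, hK⟩ := exists_cutoff m n c hc0 hc1
  set C₀ : ℝ := 2 ^ m * K * (2 ^ m * (2 ^ m * BQ * BQ) * (2 * A * (m + 1))) with hC₀
  have hC₀0 : 0 ≤ C₀ := by positivity
  refine ⟨1 + C₀, by positivity, ?_⟩
  intro x M δ hM hδ hδ1 F₁ F₂ hF₁ hF₂ hpos₁ hpos₂ hdiff Q hQdeg hQ hQx
  obtain ⟨χ, hχs, hχ01, hχz, hχD, hχK, hχV⟩ := hK x δ hδ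
  have hs₁ : ContDiff ℝ (m : ℕ) F₁ := by exact_mod_cast hF₁.1
  have hs₂ : ContDiff ℝ (m : ℕ) F₂ := by exact_mod_cast hF₂.1
  have hle : ∀ {f : Euc n → ℝ}, ContDiff ℝ (m : ℕ) f → ∀ j ≤ m, ContDiff ℝ (j : ℕ) f :=
    fun hf j hj => hf.of_le (by exact_mod_cast hj)
  have hQs := contDiff_peval Q m
  set G : Euc n → ℝ := fun y => F₁ y - F₂ y with hG
  have hGs : ContDiff ℝ (m : ℕ) G := hs₁.sub hs₂
  -- bounds for Q
  have hQb : ∀ y ∈ Metric.closedBall x δ, ∀ j ≤ m,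
      ‖iteratedFDeriv ℝ j (peval Q) y‖ ≤ BQ * δ⁻¹ ^ j := by
    apply taylor_bound (by positivity) hδ hQs
    · intro j hj
      refine (norm_iteratedFDeriv_le_of_mD (hle hQs j hj.le) x (δ⁻¹ ^ j) (by positivity) ?_).trans ?_
      · intro α hα
        have := hQ α (by omega)
        rw [hα] at this
        simpa using this
      · exact mul_le_mul_of_nonneg_right (hAj j hj.le) (by positivity)
    · intro y _
      rw [hiZero_peval Q m (by omega) y, norm_zero]
      positivity
  -- bounds for G
  have hGb : ∀ y ∈ Metric.closedBall x δ, ∀ j ≤ m,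
      ‖iteratedFDeriv ℝ j G y‖ ≤ ((2 * A * M * δ ^ m) * (m + 1)) * δ⁻¹ ^ j := by
    apply taylor_bound (by positivity) hδ hGs
    · intro j hj
      refine (norm_iteratedFDeriv_le_of_mD (hle hGs j hj.le) x (M * δ ^ (m - j))
        (by positivity) ?_).trans ?_
      · intro α hα
        have := hdiff α (by omega)
        rw [hα] at this
        rwa [hG, mD_sub α (hle hs₁ _ (by omega)) (hle hs₂ _ (by omega))]
      · have e : δ ^ m * δ⁻¹ ^ j = δ ^ (m - j) := by
          rw [inv_pow, ← div_eq_mul_inv, pow_sub₀ δ hδ.ne' hj.le, div_eq_mul_inv]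
        calc (n : ℝ) ^ j * (M * δ ^ (m - j)) ≤ (2 * A) * (M * δ ^ (m - j)) :=
              mul_le_mul_of_nonneg_right (by linarith [hAj j hj.le]) (by positivity)
          _ = 2 * A * M * δ ^ m * δ⁻¹ ^ j := by rw [← e]; ring
    · intro y _
      refine (norm_iteratedFDeriv_le_of_mD hGs y (2 * M) (by positivity) ?_).trans ?_
      · intro α hα
        rw [hG, mD_sub α (hle hs₁ _ (by omega)) (hle hs₂ _ (by omega))]
        have h1 := hF₁.2 α (by omega) y
        have h2 := hF₂.2 α (by omega) y
        have := abs_sub (mD α F₁ y) (mD α F₂ y)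
        linarith
      · have e : δ ^ m * δ⁻¹ ^ m = 1 := by
          rw [← mul_pow, mul_inv_cancel₀ hδ.ne', one_pow]
        calc (n : ℝ) ^ m * (2 * M) ≤ 2 * A * M * (δ ^ m * δ⁻¹ ^ m) := by rw [e]; linarith
          _ = _ := by ring
  -- Q is bounded by one on the small ball
  have hQ1 : ∀ y, ‖y - x‖ ≤ c * δ → peval Q y * peval Q y ≤ 1 := by
    intro y hy
    have hyδ : y ∈ Metric.closedBall x δ := by
      rw [Metric.mem_closedBall, dist_eq_norm]; nlinarith
    have hmv := (convex_closedBall x δ).norm_image_sub_le_of_norm_fderiv_le (𝕜 := ℝ)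
        (f := peval Q) (C := BQ * δ⁻¹)
        (fun z _ => (contDiff_peval Q 1).differentiable (by norm_num) z)
        (fun z hz => by
          rw [← norm_iteratedFDeriv_one]
          simpa using hQb z hz 1 hm) (Metric.mem_closedBall_self hδ.le) hyδ
    have h4 : BQ * δ⁻¹ * ‖y - x‖ ≤ 1 / 4 := by
      calc BQ * δ⁻¹ * ‖y - x‖ ≤ BQ * δ⁻¹ * (c * δ) := mul_le_mul_of_nonneg_left hy (by positivity)
        _ = 1 / 4 := by rw [hc]; field_simp
    have h5 : |peval Q y - peval Q x| ≤ 1 / 4 := by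
      rw [← Real.norm_eq_abs]; exact hmv.trans h4
    have h6 : |peval Q x| ≤ 3 / 4 := by
      rw [abs_le]; constructor <;> nlinarith
    have h7 : |peval Q y| ≤ 1 := by
      have := abs_sub_abs_le_abs_sub (peval Q y) (peval Q x)
      linarith
    have h8 := abs_le.mp h7
    nlinarith
  -- the function
  set H : Euc n → ℝ := fun y => χ y * (peval Q y * peval Q y * G y) with hH
  have hQGs : ContDiff ℝ (m : ℕ) (fun y => peval Q y * peval Q y * G y) := (hQs.mul hQs).mul hGs
  have hHs : ContDiff ℝ (m : ℕ) H := (hχs m).mul hQGs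
  have hHb : ∀ y, ∀ j ≤ m, ‖iteratedFDeriv ℝ j H y‖ ≤ C₀ * M := by
    intro y j hj
    by_cases hy : δ < ‖y - x‖
    · refine (norm_iteratedFDeriv_mul_le (hχs m) hQGs y (by exact_mod_cast hj)).trans ?_
      rw [Finset.sum_eq_zero]
      · positivity
      · intro i _
        rw [hχD y hy i]; simp
    · have hyδ : y ∈ Metric.closedBall x δ := by
        rw [Metric.mem_closedBall, dist_eq_norm]; linarith
      have hδi : 0 ≤ δ⁻¹ := by positivity
      have b1 := mul_bound (by positivity) (by positivity) hδi hQs hQs (hQb y hyδ) (hQb y hyδ)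
      have b2 := mul_bound (by positivity) (by positivity) hδi (hQs.mul hQs) hGs b1 (hGb y hyδ)
      have b3 := mul_bound hK0 (by positivity) hδi (hχs m) hQGs (hχK y) b2 j hj
      refine b3.trans ?_
      have e : δ ^ m * δ⁻¹ ^ j ≤ 1 := by
        rw [inv_pow, ← div_eq_mul_inv, div_le_one (by positivity)]
        exact pow_le_pow_of_le_one hδ.le hδ1 hj
      calc _ = C₀ * M * (δ ^ m * δ⁻¹ ^ j) := by rw [hC₀]; ring
        _ ≤ C₀ * M := mul_le_of_le_one_right (by positivity) e
  refine ⟨fun y => F₂ y + H y, ⟨?_, ?_⟩, ?_, ?_⟩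
  · exact_mod_cast hs₂.add hHs
  · intro α hα y
    have h1 := mD_linear α 1 1 (hle hs₂ _ hα) (hle hHs _ hα) y
    simp only [one_mul] at h1
    rw [h1]
    have h2 := hF₂.2 α hα y
    have h3 := (abs_mD_le α (hle hHs _ hα) y).trans (hHb y _ hα)
    refine (abs_add_le _ _).trans ?_
    linarith
  · intro y
    have h1 := hpos₁ y
    have h2 := hpos₂ y
    have hψ0 : 0 ≤ χ y * (peval Q y * peval Q y) := mul_nonneg (hχ01 y).1 (mul_self_nonneg _)
    have hψ1 : χ y * (peval Q y * peval Q y) ≤ 1 := by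
      by_cases hy : c * δ ≤ ‖y - x‖
      · rw [hχz y hy]; simp
      · exact mul_le_one₀ (hχ01 y).2 (mul_self_nonneg _) (hQ1 y (by linarith))
    have e : F₂ y + H y = (1 - χ y * (peval Q y * peval Q y)) * F₂ y +
        χ y * (peval Q y * peval Q y) * F₁ y := by
      simp only [hH, hG]; ring
    change 0 ≤ F₂ y + H y
    rw [e]
    exact add_nonneg (mul_nonneg (by linarith) h2) (mul_nonneg hψ0 h1)
  · have := Van.mulLeft hQGs ((hχs m).sub contDiff_const) hχV
    convert this using 2 with y
    simp only [hH, hG]; ring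

theorem van_of_jet {m n : ℕ} (hm : 0 < m) {F : Euc n → ℝ} {x : Euc n} {P : MPoly n}
    (hF : ContDiff ℝ (m : ℕ) F) (h : IsJetAt m n F x P) :
    Van (fun y => peval P y - F y) x m := by
  intro j hj
  have hF' : ContDiff ℝ (j : ℕ) F := hF.of_le (by exact_mod_cast hj.le)
  rw [← norm_le_zero_iff]
  have := norm_iteratedFDeriv_le_of_mD (j := j) (F := fun y => peval P y - F y)
    ((contDiff_peval P j).sub hF') x 0 le_rfl ?_
  · simpa using this
  · intro α hα
    subst hα
    rw [mD_sub α (contDiff_peval P _) hF', h.2 α (by omega)]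
    simp

theorem peval_one {n : ℕ} (y : Euc n) : peval (1 : MPoly n) y = 1 := by simp [peval]

theorem jet_combine {m n : ℕ} (hm : 0 < m) {F F₁ F₂ : Euc n → ℝ} {x : Euc n}
    {P₁ P₂ Q₁ Q₂ : MPoly n}
    (hF : ContDiff ℝ (m : ℕ) F) (hF₁ : ContDiff ℝ (m : ℕ) F₁) (hF₂ : ContDiff ℝ (m : ℕ) F₂)
    (h₁ : IsJetAt m n F₁ x P₁) (h₂ : IsJetAt m n F₂ x P₂)
    (hQ : jmul m n x Q₁ Q₁ + jmul m n x Q₂ Q₂ = 1)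
    (hV : Van (fun y => F y - (F₂ y + peval Q₁ y * peval Q₁ y * (F₁ y - F₂ y))) x m) :
    Van (fun y => peval (jmul m n x (jmul m n x Q₁ Q₁) P₁ + jmul m n x (jmul m n x Q₂ Q₂) P₂) y
      - F y) x m := by
  have hs : ∀ y, peval (jmul m n x Q₁ Q₁) y + peval (jmul m n x Q₂ Q₂) y = 1 := by
    intro y
    have := congrArg (fun R => peval R y) hQ
    simpa [peval_add, peval_one] using this
  have a1 := van_jetTrunc hm x (Q₁ * Q₁)
  have a2 := van_jetTrunc hm x (jmul m n x Q₁ Q₁ * P₁)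
  have a3 := van_jetTrunc hm x (jmul m n x Q₂ Q₂ * P₂)
  have b1 := van_of_jet hm hF₁ h₁
  have b2 := van_of_jet hm hF₂ h₂
  have c := fun P : MPoly n => contDiff_peval P m
  have k : ContDiff ℝ (m : ℕ) (fun _ : Euc n => (-1 : ℝ)) := contDiff_const
  have d1 := Van.mulLeft ((c P₂).sub (c P₁)) ((c _).sub (c _)) a1
  have d2 := Van.mulLeft k ((c _).sub (c _)) a2
  have d3 := Van.mulLeft k ((c _).sub (c _)) a3
  have d4 := Van.mulLeft ((c Q₁).mul (c Q₁)) ((c _).sub hF₁) b1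
  have d5 := Van.mulLeft (contDiff_const.sub ((c Q₁).mul (c Q₁))) ((c _).sub hF₂) b2
    (g := fun y => 1 - peval Q₁ y * peval Q₁ y)
  have hVs : ContDiff ℝ (m : ℕ)
      (fun y => F y - (F₂ y + peval Q₁ y * peval Q₁ y * (F₁ y - F₂ y))) :=
    hF.sub (hF₂.add (((c Q₁).mul (c Q₁)).mul (hF₁.sub hF₂)))
  have d6 := Van.mulLeft k hVs hV
  have s1 := ((c P₂).sub (c P₁)).mul ((c (Q₁ * Q₁)).sub (c (jetTrunc m n x (Q₁ * Q₁))))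
  have s2 := k.mul ((c (jmul m n x Q₁ Q₁ * P₁)).sub
    (c (jetTrunc m n x (jmul m n x Q₁ Q₁ * P₁))))
  have s3 := k.mul ((c (jmul m n x Q₂ Q₂ * P₂)).sub
    (c (jetTrunc m n x (jmul m n x Q₂ Q₂ * P₂))))
  have s4 := ((c Q₁).mul (c Q₁)).mul ((c P₁).sub hF₁)
  have s5 : ContDiff ℝ (m : ℕ)
      (fun y => (1 - peval Q₁ y * peval Q₁ y) * (peval P₂ y - F₂ y)) :=
    (contDiff_const.sub ((c Q₁).mul (c Q₁))).mul ((c P₂).sub hF₂)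
  have s6 := k.mul hVs
  have t2 := Van.add s1 s2 d1 d2
  have t3 := Van.add (s1.add s2) s3 t2 d3
  have t4 := Van.add ((s1.add s2).add s3) s4 t3 d4
  have t5 := Van.add (((s1.add s2).add s3).add s4) s5 t4 d5
  have t6 := Van.add ((((s1.add s2).add s3).add s4).add s5) s6 t5 d6
  convert t6 using 2 with y
  simp only [peval_add, peval_mul]
  have e2 : peval (jmul m n x Q₂ Q₂) y = 1 - peval (jmul m n x Q₁ Q₁) y := by
    linarith [hs y]
  rw [e2]
  change _ = (peval P₂ y - peval P₁ y) * (peval Q₁ y * peval Q₁ y - peval (jmul m n x Q₁ Q₁) y) +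
    (-1) * (peval (jmul m n x Q₁ Q₁) y * peval P₁ y -
      peval (jmul m n x (jmul m n x Q₁ Q₁) P₁) y) +
    (-1) * ((1 - peval (jmul m n x Q₁ Q₁) y) * peval P₂ y -
      peval (jmul m n x (jmul m n x Q₂ Q₂) P₂) y) + _ + _ + _
  ring

theorem isJet_of_van {m n : ℕ} (hm : 0 < m) {F : Euc n → ℝ} {x : Euc n} {P : MPoly n}
    (hP : P.totalDegree ≤ m - 1)
    (hF : ContDiff ℝ (m : ℕ) F) (h : Van (fun y => peval P y - F y) x m) :
    IsJetAt m n F x P := by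
  refine ⟨hP, fun α hα => ?_⟩
  have hF' : ContDiff ℝ (deg α : ℕ) F := hF.of_le (by exact_mod_cast (by omega))
  have h1 := abs_mD_le α ((contDiff_peval P (deg α)).sub hF') x
  rw [h (deg α) (by omega), norm_zero, mD_sub α (contDiff_peval P _) hF'] at h1
  exact sub_eq_zero.mp (abs_nonpos_iff.mp h1)

theorem smooth_of {m n : ℕ} {F : Euc n → ℝ} {M : ℝ} (h : CmNormLe m n F M) :
    ContDiff ℝ (m : ℕ) F := by exact_mod_cast h.1

theorem mD_jet_sub {m n : ℕ} (hm : 0 < m) {F₁ F₂ : Euc n → ℝ} {x : Euc n} {P₁ P₂ : MPoly n}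
    (h₁ : IsJetAt m n F₁ x P₁) (h₂ : IsJetAt m n F₂ x P₂)
    (β : Fin n → ℕ) (hβ : deg β ≤ m - 1) :
    mD β (peval (P₁ - P₂)) x = mD β F₁ x - mD β F₂ x := by
  rw [peval_sub, mD_sub β (contDiff_peval _ _) (contDiff_peval _ _), h₁.2 β hβ, h₂.2 β hβ]

theorem jmul_eval {m n : ℕ} (hm : 0 < m) (x : Euc n) (P Q : MPoly n) :
    peval (jmul m n x P Q) x = peval P x * peval Q x := by
  have := (van_jetTrunc hm x (P * Q)).eval_eq hm
  rw [peval_mul] at this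
  unfold jmul
  linarith

theorem finish {m n : ℕ} (hm : 0 < m) {f : Euc n → ℝ} {x : Euc n} {M : ℝ}
    {F F₁ F₂ : Euc n → ℝ} {P₁ P₂ Q₁ Q₂ : MPoly n}
    (hF : CmNormLe m n F M) (hpos : ∀ y, 0 ≤ F y)
    (hF₁ : ContDiff ℝ (m : ℕ) F₁) (hF₂ : ContDiff ℝ (m : ℕ) F₂)
    (h₁ : IsJetAt m n F₁ x P₁) (h₂ : IsJetAt m n F₂ x P₂)
    (hx₁ : peval P₁ x = f x) (hx₂ : peval P₂ x = f x)
    (hQ : jmul m n x Q₁ Q₁ + jmul m n x Q₂ Q₂ = 1)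
    (hV : Van (fun y => F y - (F₂ y + peval Q₁ y * peval Q₁ y * (F₁ y - F₂ y))) x m) :
    jmul m n x (jmul m n x Q₁ Q₁) P₁ + jmul m n x (jmul m n x Q₂ Q₂) P₂ ∈ GammaF m n f x M := by
  have hV2 := jet_combine hm (smooth_of hF) hF₁ hF₂ h₁ h₂ hQ hV
  refine ⟨⟨F, hF, hpos, isJet_of_van hm ?_ (smooth_of hF) hV2⟩, ?_⟩
  · exact (MvPolynomial.totalDegree_add _ _).trans
      (max_le (totalDegree_jmul _ _ _) (totalDegree_jmul _ _ _))
  · have := congrArg (fun R => peval R x) hQ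
    simp only [peval_add, peval_one] at this
    simp only [peval_add]
    rw [jmul_eval hm x _ P₁, jmul_eval hm x _ P₂, hx₁, hx₂, ← add_mul, this, one_mul]

/-- **Lemma 2.1**: `Γ⃗_f` is a `(C,1)`-convex shape field. -/
theorem GammaF_is_convex_shape_field (m n : ℕ) (hm : 0 < m) (hn : 0 < n) :
    ∃ C : ℝ, 0 < C ∧
      ∀ (E : Set (Euc n)), E.Finite → ∀ f : Euc n → ℝ, (∀ x ∈ E, 0 ≤ f x) →
        (∀ x ∈ E, ∀ M : ℝ, 0 < M → Convex ℝ (GammaF m n f x M)) ∧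
        (∀ x ∈ E, ∀ M' M : ℝ, 0 < M' → M' ≤ M → GammaF m n f x M' ⊆ GammaF m n f x M) ∧
        (∀ δ : ℝ, 0 < δ → δ ≤ 1 → ∀ x ∈ E, ∀ M : ℝ, 0 < M →
          ∀ P₁ ∈ GammaF m n f x M, ∀ P₂ ∈ GammaF m n f x M,
          (∀ β : Fin n → ℕ, deg β ≤ m - 1 →
            |mD β (peval (P₁ - P₂)) x| ≤ M * δ ^ (m - deg β)) →
          ∀ Q₁ Q₂ : MPoly n,
            MvPolynomial.totalDegree Q₁ ≤ m - 1 → MvPolynomial.totalDegree Q₂ ≤ m - 1 →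
          (∀ β : Fin n → ℕ, deg β ≤ m - 1 →
            |mD β (peval Q₁) x| ≤ δ ^ (-(deg β : ℤ)) ∧
            |mD β (peval Q₂) x| ≤ δ ^ (-(deg β : ℤ))) →
          jmul m n x Q₁ Q₁ + jmul m n x Q₂ Q₂ = 1 →
          jmul m n x (jmul m n x Q₁ Q₁) P₁ + jmul m n x (jmul m n x Q₂ Q₂) P₂
            ∈ GammaF m n f x (C * M)) := by
  obtain ⟨C, hC, key⟩ := key_lemma m n hm hn
  refine ⟨C, hC, ?_⟩
  intro E _ f _
  refine ⟨?_, ?_, ?_⟩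
  · rintro x - M hM P ⟨⟨F, hF, hFpos, hFj⟩, hP⟩ Q ⟨⟨G, hG, hGpos, hGj⟩, hQ⟩ a b ha hb hab
    have hle : ∀ {f : Euc n → ℝ}, ContDiff ℝ (m : ℕ) f → ∀ j ≤ m, ContDiff ℝ (j : ℕ) f :=
      fun hf j hj => hf.of_le (by exact_mod_cast hj)
    have hFs := smooth_of hF
    have hGs := smooth_of hG
    have hpe : peval (a • P + b • Q) = fun y => a * peval P y + b * peval Q y := by
      funext y; simp [peval, MvPolynomial.smul_eval]
    refine ⟨⟨fun y => a * F y + b * G y, ⟨?_, ?_⟩, ?_, ?_, ?_⟩, ?_⟩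
    · exact_mod_cast (contDiff_const.mul hFs).add (contDiff_const.mul hGs)
    · intro α hα y
      rw [mD_linear α a b (hle hFs _ hα) (hle hGs _ hα)]
      refine (abs_add_le _ _).trans ?_
      rw [abs_mul, abs_mul, abs_of_nonneg ha, abs_of_nonneg hb]
      have h1 := mul_le_mul_of_nonneg_left (hF.2 α hα y) ha
      have h2 := mul_le_mul_of_nonneg_left (hG.2 α hα y) hb
      calc _ ≤ a * M + b * M := add_le_add h1 h2
        _ = M := by rw [← add_mul, hab, one_mul]
    · intro y
      exact add_nonneg (mul_nonneg ha (hFpos y)) (mul_nonneg hb (hGpos y))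
    · refine (MvPolynomial.totalDegree_add _ _).trans (max_le ?_ ?_)
      · exact (MvPolynomial.totalDegree_smul_le _ _).trans hFj.1
      · exact (MvPolynomial.totalDegree_smul_le _ _).trans hGj.1
    · intro α hα
      rw [hpe, mD_linear α a b (contDiff_peval _ _) (contDiff_peval _ _),
        mD_linear α a b (hle hFs _ (by omega)) (hle hGs _ (by omega)), hFj.2 α hα, hGj.2 α hα]
    · rw [hpe]
      simp only [hP, hQ]
      rw [← add_mul, hab, one_mul]
  · rintro x - M' M hM' hMM P ⟨⟨F, hF, hFpos, hFj⟩, hP⟩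
    exact ⟨⟨F, ⟨hF.1, fun α hα y => (hF.2 α hα y).trans hMM⟩, hFpos, hFj⟩, hP⟩
  · rintro δ hδ hδ1 x - M hM P₁ ⟨⟨F₁, hF₁, hpos₁, hj₁⟩, hx₁⟩ P₂ ⟨⟨F₂, hF₂, hpos₂, hj₂⟩, hx₂⟩
      hdiff Q₁ Q₂ hd₁ hd₂ hQb hQ
    have hdiff' : ∀ β : Fin n → ℕ, deg β ≤ m - 1 →
        |mD β F₁ x - mD β F₂ x| ≤ M * δ ^ (m - deg β) := by
      intro β hβ
      rw [← mD_jet_sub hm hj₁ hj₂ β hβ]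
      exact hdiff β hβ
    have hsum : peval Q₁ x ^ 2 + peval Q₂ x ^ 2 = 1 := by
      have := congrArg (fun R => peval R x) hQ
      simp only [peval_add, peval_one, jmul_eval hm] at this
      linarith
    by_cases hc : peval Q₁ x ^ 2 ≤ 1 / 2
    · obtain ⟨F, hF, hpos, hV⟩ := key x M δ hM hδ hδ1 F₁ F₂ hF₁ hF₂ hpos₁ hpos₂ hdiff' Q₁ hd₁
        (fun β hβ => (hQb β hβ).1) hc
      exact finish hm hF hpos (smooth_of hF₁) (smooth_of hF₂) hj₁ hj₂ hx₁ hx₂ hQ hV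
    · obtain ⟨F, hF, hpos, hV⟩ := key x M δ hM hδ hδ1 F₂ F₁ hF₂ hF₁ hpos₂ hpos₁
        (fun β hβ => by rw [abs_sub_comm]; exact hdiff' β hβ) Q₂ hd₂
        (fun β hβ => (hQb β hβ).2) (by linarith)
      rw [add_comm]
      rw [add_comm] at hQ
      exact finish hm hF hpos (smooth_of hF₂) (smooth_of hF₁) hj₂ hj₁ hx₂ hx₁ hQ hV

end
end

section
/- Let m, n be positive integers and E ⊂ ℝⁿ a finite set. Let (P^x)_{x∈E} be a family of polynomials of degree at most m−1 and let M > 0. Suppose that P^x ∈ Γ*(x, M) for each x ∈ E, and that |∂^β(P^x − P^{x'})(x)| ≤ M|x − x'|^{m−|β|} for all x, x' ∈ E and |β| ≤ m−1. Then there exist a constant C depending only on m, n and a function F ∈ C^m(ℝⁿ) such that ‖F‖_{C^m(ℝⁿ)} ≤ CM, F ≥ 0 everywhere on ℝⁿ, and J_x(F) = P^x for all x ∈ E. -/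
open scoped BigOperators

noncomputable section

/-! ### Partial derivatives and iterated Fréchet derivatives -/

namespace WhitneyNonneg

/-- Iterated partial derivatives along a list, as an evaluation of `iteratedFDeriv`. -/
lemma foldr_pD_eq {n : ℕ} (F : Euc n → ℝ) (l : List (Fin n)) (hF : ContDiff ℝ l.length F) :
    l.foldr pD F = fun x => iteratedFDeriv ℝ l.length F x
      (fun i => EuclideanSpace.single (l.get i) (1 : ℝ)) := by
  induction l with
  | nil => funext x; simp
  | cons a l ih =>
    have hF' : ContDiff ℝ l.length F := hF.of_le (by simp)
    funext x
    have hd : DifferentiableAt ℝ (iteratedFDeriv ℝ l.length F) x := by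
      refine ContDiff.differentiable_iteratedFDeriv (n := ((a :: l).length : ℕ)) ?_ hF x
      exact_mod_cast Nat.lt_succ_self l.length
    rw [List.foldr_cons, ih hF']
    simp only [pD]
    have := (hd.hasFDerivAt.continuousMultilinear_apply_const
      (fun i => EuclideanSpace.single (l.get i) (1 : ℝ))).fderiv
    rw [this]
    rfl

lemma list_length {n : ℕ} (α : Fin n → ℕ) :
    ((List.finRange n).flatMap fun i => List.replicate (α i) i).length = deg α := by
  simp [List.length_flatMap, deg, List.sum_ofFn, ← List.ofFn_eq_map]

lemma contDiff_pD {n k : ℕ} (i : Fin n) {F : Euc n → ℝ} (hF : ContDiff ℝ (k + 1 : ℕ) F) :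
    ContDiff ℝ k (pD i F) := by
  have : ContDiff ℝ k (fderiv ℝ F) := hF.fderiv_right (by norm_cast)
  exact this.clm_apply contDiff_const

lemma contDiff_foldr {n k : ℕ} (l : List (Fin n)) {F : Euc n → ℝ}
    (hF : ContDiff ℝ (k + l.length : ℕ) F) : ContDiff ℝ k (l.foldr pD F) := by
  induction l generalizing k with
  | nil => simpa using hF
  | cons a l ih =>
    rw [List.foldr_cons]
    apply contDiff_pD
    apply ih
    have e : k + 1 + l.length = k + (a :: l).length := by simp; omega
    rw [e]; exact hF

lemma pD_comm {n : ℕ} (i j : Fin n) {F : Euc n → ℝ} (hF : ContDiff ℝ 2 F) :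
    pD i (pD j F) = pD j (pD i F) := by
  funext x
  have hs : IsSymmSndFDerivAt ℝ F x := hF.contDiffAt.isSymmSndFDerivAt (by simp)
  have h1 : DifferentiableAt ℝ (fderiv ℝ F) x :=
    (hF.fderiv_right (m := 1) (by norm_num)).differentiable (by norm_num) x
  have key : ∀ i j : Fin n, pD i (pD j F) x =
      fderiv ℝ (fderiv ℝ F) x (EuclideanSpace.single i (1 : ℝ)) (EuclideanSpace.single j (1 : ℝ)) := by
    intro i j
    have e := (h1.hasFDerivAt.clm_apply
      (hasFDerivAt_const (EuclideanSpace.single j (1 : ℝ)) x)).fderiv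
    change fderiv ℝ (fun y => fderiv ℝ F y (EuclideanSpace.single j (1 : ℝ))) x _ = _
    rw [e]
    simp
  rw [key, key]
  exact hs _ _

lemma foldr_perm {n : ℕ} {l l' : List (Fin n)} (h : l.Perm l') {F : Euc n → ℝ}
    (hF : ContDiff ℝ l.length F) : l.foldr pD F = l'.foldr pD F := by
  induction h with
  | nil => rfl
  | cons x h ih =>
    simp only [List.foldr_cons]
    rw [ih (hF.of_le (by simp))]
  | swap x y l =>
    simp only [List.foldr_cons]
    apply pD_comm
    apply contDiff_foldr (k := 2)
    have e : 2 + l.length = (y :: x :: l).length := by simp; omega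
    rw [e]; exact hF
  | trans h1 h2 ih1 ih2 =>
    rw [ih1 hF, ih2 (by rwa [← h1.length_eq])]

lemma list_perm {n k : ℕ} (r : Fin k → Fin n) :
    ∃ α : Fin n → ℕ, (List.ofFn r).Perm
      ((List.finRange n).flatMap fun i => List.replicate (α i) i) := by
  refine ⟨fun i => (List.ofFn r).count i, ?_⟩
  rw [List.perm_iff_count]
  intro a
  rw [List.count_flatMap]
  have : (List.count a ∘ fun i => List.replicate (List.count i (List.ofFn r)) i)
      = fun i => if i = a then List.count a (List.ofFn r) else 0 := by
    funext i
    simp only [Function.comp, List.count_replicate, beq_iff_eq]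
    by_cases h : i = a
    · subst h; simp
    · simp [h]
  rw [this, ← List.ofFn_eq_map, List.sum_ofFn]
  simp

lemma mD_eq {n : ℕ} (α : Fin n → ℕ) (F : Euc n → ℝ) (hF : ContDiff ℝ (deg α) F) (x : Euc n) :
    mD α F x = iteratedFDeriv ℝ _ F x (fun i => EuclideanSpace.single
      (((List.finRange n).flatMap fun i => List.replicate (α i) i).get i) (1 : ℝ)) := by
  unfold mD
  rw [foldr_pD_eq]
  rw [list_length]; exact hF

lemma abs_mD_le {n : ℕ} (α : Fin n → ℕ) (F : Euc n → ℝ) (hF : ContDiff ℝ (deg α) F) (x : Euc n) :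
    |mD α F x| ≤ ‖iteratedFDeriv ℝ (deg α) F x‖ := by
  rw [mD_eq α F hF, ← Real.norm_eq_abs]
  refine (ContinuousMultilinearMap.le_opNorm _ _).trans ?_
  simp only [PiLp.norm_single, norm_one, Finset.prod_const_one, mul_one]
  rw [list_length]

lemma mD_sub {n : ℕ} (α : Fin n → ℕ) (F G : Euc n → ℝ) (hF : ContDiff ℝ (deg α) F)
    (hG : ContDiff ℝ (deg α) G) (x : Euc n) :
    mD α (F - G) x = mD α F x - mD α G x := by
  rw [mD_eq α F hF, mD_eq α G hG, mD_eq α (F - G) (hF.sub hG), iteratedFDeriv_sub_apply]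
  · rfl
  · rw [list_length]; exact hF.contDiffAt
  · rw [list_length]; exact hG.contDiffAt

lemma mD_congr {n : ℕ} (α : Fin n → ℕ) (F G : Euc n → ℝ) (hF : ContDiff ℝ (deg α) F)
    (hG : ContDiff ℝ (deg α) G) (x : Euc n) (h : F =ᶠ[nhds x] G) : mD α F x = mD α G x := by
  rw [mD_eq α F hF, mD_eq α G hG, (h.iteratedFDeriv ℝ _).eq_of_nhds]

/-- The norm of the iterated derivative is controlled by the partial derivatives. -/
lemma norm_iteratedFDeriv_le_mD {n k : ℕ} (F : Euc n → ℝ) (hF : ContDiff ℝ k F) (x : Euc n)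
    (A : ℝ) (hA : 0 ≤ A) (h : ∀ α : Fin n → ℕ, deg α = k → |mD α F x| ≤ A) :
    ‖iteratedFDeriv ℝ k F x‖ ≤ (n : ℝ) ^ k * A := by
  have hb : ∀ r : Fin k → Fin n,
      |iteratedFDeriv ℝ k F x (fun i => EuclideanSpace.single (r i) (1 : ℝ))| ≤ A := by
    intro r
    obtain ⟨α, hα⟩ := list_perm r
    have hlen : deg α = k := by
      rw [← list_length, ← hα.length_eq, List.length_ofFn]
    have h1 := h α hlen
    unfold mD at h1
    rw [← foldr_perm hα (by simpa using hF), foldr_pD_eq _ _ (by simpa using hF)] at h1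
    have aux : ∀ (l : List (Fin n)) (hl : l.length = k) (hr : ∀ i : Fin k, l.get (Fin.cast hl.symm i) = r i),
        iteratedFDeriv ℝ l.length F x (fun i => EuclideanSpace.single (l.get i) (1 : ℝ)) =
        iteratedFDeriv ℝ k F x (fun i => EuclideanSpace.single (r i) (1 : ℝ)) := by
      intro l hl hr
      subst hl
      congr 1
      funext i
      rw [← hr i]; rfl
    beta_reduce at h1
    rw [aux (List.ofFn r) (by simp) (by intro i; simp)] at h1
    exact h1
  apply ContinuousMultilinearMap.opNorm_le_bound (by positivity)
  intro v
  have hv : v = fun i => ∑ j : Fin n, (v i j) • EuclideanSpace.single j (1 : ℝ) := by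
    funext i
    ext a
    simp [Finset.sum_apply, Pi.single_apply]
  have e1 : iteratedFDeriv ℝ k F x v = ∑ r : Fin k → Fin n, (∏ i, v i (r i)) *
      iteratedFDeriv ℝ k F x (fun i => EuclideanSpace.single (r i) (1 : ℝ)) := by
    conv_lhs => rw [hv]
    rw [ContinuousMultilinearMap.map_sum]
    apply Finset.sum_congr rfl
    intro r _
    rw [ContinuousMultilinearMap.map_smul_univ, smul_eq_mul]
  rw [e1]
  calc ‖∑ r : Fin k → Fin n, (∏ i, v i (r i)) *
      iteratedFDeriv ℝ k F x (fun i => EuclideanSpace.single (r i) (1 : ℝ))‖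
      ≤ ∑ r : Fin k → Fin n, (∏ i, ‖v i‖) * A := by
        refine norm_sum_le_of_le _ ?_
        intro r _
        rw [norm_mul, norm_prod]
        apply mul_le_mul _ (hb r) (abs_nonneg _) (by positivity)
        apply Finset.prod_le_prod (fun _ _ => norm_nonneg _)
        intro i _
        exact PiLp.norm_apply_le (v i) (r i)
    _ = (n : ℝ) ^ k * A * ∏ i, ‖v i‖ := by
        simp; ring

/-! ### Polynomials -/

lemma peval_hasFDerivAt {n : ℕ} (P : MPoly n) (x : Euc n) :
    ∃ L : Euc n →L[ℝ] ℝ, HasFDerivAt (peval P) L x ∧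
      ∀ i, L (EuclideanSpace.single i (1 : ℝ)) = peval (MvPolynomial.pderiv i P) x := by
  induction P using MvPolynomial.induction_on with
  | C a =>
    refine ⟨0, ?_, ?_⟩
    · have : peval (MvPolynomial.C a : MPoly n) = fun _ => a := by funext y; simp [peval]
      rw [this]; exact hasFDerivAt_const _ _
    · intro i; simp [peval]
  | add p q hp hq =>
    obtain ⟨L, hL, hL'⟩ := hp
    obtain ⟨K, hK, hK'⟩ := hq
    refine ⟨L + K, ?_, ?_⟩
    · have : peval (p + q) = fun y => peval p y + peval q y := by funext y; simp [peval]
      rw [this]; exact hL.add hK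
    · intro i; simp [hL', hK', peval]
  | mul_X p j hp =>
    obtain ⟨L, hL, hL'⟩ := hp
    have hj : HasFDerivAt (fun y : Euc n => y j) (EuclideanSpace.proj j : Euc n →L[ℝ] ℝ) x :=
      (EuclideanSpace.proj j : Euc n →L[ℝ] ℝ).hasFDerivAt
    refine ⟨peval p x • (EuclideanSpace.proj j : Euc n →L[ℝ] ℝ) + x j • L, ?_, ?_⟩
    · have : peval (p * MvPolynomial.X j) = fun y => peval p y * y j := by funext y; simp [peval]
      rw [this]; exact hL.mul hj
    · intro i
      by_cases h : i = j
      · subst h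
        simp [hL', peval]
        try ring
      · have h' : j ≠ i := fun h' => h h'.symm
        simp [hL', peval, MvPolynomial.pderiv_X_of_ne h', h']
        try ring

lemma pD_peval {n : ℕ} (i : Fin n) (P : MPoly n) :
    pD i (peval P) = peval (MvPolynomial.pderiv i P) := by
  funext x
  obtain ⟨L, hL, h⟩ := peval_hasFDerivAt P x
  rw [pD, hL.fderiv, h]

lemma peval_contDiff {n : ℕ} (P : MPoly n) {k : WithTop ℕ∞} : ContDiff ℝ k (peval P) := by
  induction P using MvPolynomial.induction_on with
  | C a =>
    have : peval (MvPolynomial.C a : MPoly n) = fun _ => a := by funext y; simp [peval]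
    rw [this]; exact contDiff_const
  | add p q hp hq =>
    have : peval (p + q) = fun y => peval p y + peval q y := by funext y; simp [peval]
    rw [this]; exact hp.add hq
  | mul_X p j hp =>
    have : peval (p * MvPolynomial.X j) = fun y => peval p y * y j := by funext y; simp [peval]
    rw [this]
    exact hp.mul (EuclideanSpace.proj j : Euc n →L[ℝ] ℝ).contDiff

lemma foldr_peval {n : ℕ} (l : List (Fin n)) (P : MPoly n) :
    l.foldr pD (peval P) = peval (l.foldr (fun i Q => MvPolynomial.pderiv i Q) P) := by
  induction l with
  | nil => rfl
  | cons a l ih => rw [List.foldr_cons, List.foldr_cons, ih, pD_peval]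

lemma coeff_foldr {n N : ℕ} (l : List (Fin n)) (P : MPoly n)
    (hP : ∀ s : Fin n →₀ ℕ, N ≤ s.degree → P.coeff s = 0) :
    ∀ s : Fin n →₀ ℕ, N ≤ s.degree + l.length →
      (l.foldr (fun i Q => MvPolynomial.pderiv i Q) P).coeff s = 0 := by
  induction l with
  | nil => intro s hs; exact hP s (by simpa using hs)
  | cons a l ih =>
    intro s hs
    rw [List.foldr_cons, MvPolynomial.coeff_pderiv, ih, zero_mul]
    simp [map_add] at hs ⊢
    omega

lemma iteratedFDeriv_peval {n m : ℕ} (hm : 0 < m) (P : MPoly n) (hP : P.totalDegree ≤ m - 1)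
    (x : Euc n) : iteratedFDeriv ℝ m (peval P) x = 0 := by
  have h := norm_iteratedFDeriv_le_mD (peval P) (peval_contDiff P (k := m)) x 0 le_rfl (by
    intro α hα
    unfold mD
    rw [foldr_peval]
    have : ((List.finRange n).flatMap fun i => List.replicate (α i) i).foldr
        (fun i Q => MvPolynomial.pderiv i Q) P = 0 := by
      ext s
      rw [MvPolynomial.coeff_zero]
      apply coeff_foldr (N := m)
      · intro s hs
        apply MvPolynomial.coeff_eq_zero_of_totalDegree_lt
        have : ∑ i ∈ s.support, s i = s.degree := rfl
        omega
      · rw [list_length]; omega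
    rw [this]; simp [peval])
  rw [mul_zero] at h
  exact norm_le_zero_iff.1 h

/-! ### Taylor-type estimates -/

lemma decay {n m : ℕ} (H : Euc n → ℝ) (hH : ContDiff ℝ m H) (x : Euc n) (r A : ℝ) (hr : 0 ≤ r)
    (hA : 0 ≤ A) (htop : ∀ y, ‖iteratedFDeriv ℝ m H y‖ ≤ A)
    (hx : ∀ j < m, ‖iteratedFDeriv ℝ j H x‖ ≤ A * r ^ (m - j)) :
    ∀ k ≤ m, ∀ y ∈ Metric.closedBall x r,
      ‖iteratedFDeriv ℝ (m - k) H y‖ ≤ 2 ^ k * A * r ^ k := by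
  intro k
  induction k with
  | zero => intro _ y _; simpa using htop y
  | succ k ih =>
    intro hk y hy
    have hj : m - k = (m - (k + 1)) + 1 := by omega
    have ih' := ih (by omega)
    rw [hj] at ih'
    have h1 : ‖iteratedFDeriv ℝ (m - (k + 1)) H y - iteratedFDeriv ℝ (m - (k + 1)) H x‖
        ≤ (2 ^ k * A * r ^ k) * ‖y - x‖ := by
      refine Convex.norm_image_sub_le_of_norm_fderiv_le (𝕜 := ℝ) (s := Metric.closedBall x r)
        ?_ ?_ (convex_closedBall x r) (Metric.mem_closedBall_self hr) hy
      · intro z _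
        refine ContDiff.differentiable_iteratedFDeriv (n := m) ?_ hH z
        exact_mod_cast (by omega : m - (k + 1) < m)
      · intro z hz
        rw [norm_fderiv_iteratedFDeriv]
        exact ih' z hz
    have h2 := hx (m - (k + 1)) (by omega)
    have e : m - (m - (k + 1)) = k + 1 := by omega
    rw [e] at h2
    have h3 : ‖y - x‖ ≤ r := by rwa [mem_closedBall_iff_norm] at hy
    have h4 : (2 ^ k * A * r ^ k) * ‖y - x‖ ≤ (2 ^ k * A * r ^ k) * r :=
      mul_le_mul_of_nonneg_left h3 (by positivity)
    have h5 := norm_le_norm_sub_add (iteratedFDeriv ℝ (m - (k + 1)) H y)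
      (iteratedFDeriv ℝ (m - (k + 1)) H x)
    have h6 : (1 : ℝ) ≤ 2 ^ k := one_le_pow₀ (by norm_num)
    have h7 : A * r ^ (k + 1) ≤ 2 ^ k * (A * r ^ (k + 1)) := le_mul_of_one_le_left (by positivity) h6
    calc _ ≤ (2 ^ k * A * r ^ k) * r + A * r ^ (k + 1) := by linarith
      _ ≤ (2 ^ k * A * r ^ k) * r + 2 ^ k * (A * r ^ (k + 1)) := by linarith
      _ = _ := by ring

lemma compare {n m : ℕ} (hm : 0 < m) (hn : 0 < n) (x x' : Euc n) (P P' : MPoly n)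
    (F F' : Euc n → ℝ) (M : ℝ) (hM : 0 < M)
    (hF : CmNormLe m n F M) (hF' : CmNormLe m n F' M)
    (hP : IsJetAt m n F x P) (hP' : IsJetAt m n F' x' P')
    (hPP : ∀ β : Fin n → ℕ, deg β ≤ m - 1 →
          |mD β (peval (P - P')) x| ≤ M * ‖x - x'‖ ^ (m - deg β))
    (r : ℝ) (hr : ‖x - x'‖ ≤ r) (y : Euc n) (hy : ‖y - x‖ ≤ r) (j : ℕ) (hj : j ≤ m) :
    ‖iteratedFDeriv ℝ j (F - F') y‖ ≤ (3 * 4 ^ m * (n : ℝ) ^ m * M) * r ^ (m - j) := by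
  have hr0 : 0 ≤ r := (norm_nonneg _).trans hr
  have hn1 : (1 : ℝ) ≤ n := by exact_mod_cast hn
  have npow : ∀ k ≤ m, (n : ℝ) ^ k ≤ (n : ℝ) ^ m := fun k hk => pow_le_pow_right₀ hn1 hk
  set A : ℝ := (n : ℝ) ^ m * M with hA
  have hA0 : 0 ≤ A := by positivity
  have cF : ContDiff ℝ m F := by exact_mod_cast hF.1
  have cF' : ContDiff ℝ m F' := by exact_mod_cast hF'.1
  have cP : ∀ Q : MPoly n, ContDiff ℝ m (peval Q) := fun Q => peval_contDiff Q
  -- remainder estimate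
  have rem : ∀ (z : Euc n) (Q : MPoly n) (G : Euc n → ℝ), CmNormLe m n G M → IsJetAt m n G z Q →
      ‖y - z‖ ≤ 2 * r →
      ‖iteratedFDeriv ℝ j (G - peval Q) y‖ ≤ 2 ^ (m - j) * A * (2 * r) ^ (m - j) := by
    intro z Q G hG hQ hz
    have cG : ContDiff ℝ m G := by exact_mod_cast hG.1
    have := decay (m := m) (G - peval Q) (cG.sub (cP Q)) z (2 * r) A (by positivity) hA0 ?_ ?_ (m - j)
      (by omega) y (by rwa [mem_closedBall_iff_norm])
    · rwa [show m - (m - j) = j by omega] at this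
    · intro w
      rw [iteratedFDeriv_sub_apply cG.contDiffAt (cP Q).contDiffAt, iteratedFDeriv_peval hm Q hQ.1,
        sub_zero]
      exact norm_iteratedFDeriv_le_mD G cG w M hM.le (fun α hα => hG.2 α hα.le w)
    · intro i hi
      have h := norm_iteratedFDeriv_le_mD (k := i) (G - peval Q)
        ((cG.sub (cP Q)).of_le (by exact_mod_cast hi.le)) z 0 le_rfl (by
          intro α hα
          rw [mD_sub α _ _ (cG.of_le (by rw [hα]; exact_mod_cast hi.le)) (peval_contDiff Q),
            hQ.2 α (by omega)]
          simp)
      rw [mul_zero] at h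
      exact h.trans (by positivity)
  have h1 := rem x P F hF hP (by linarith)
  have h2 := rem x' P' F' hF' hP' (by
    calc ‖y - x'‖ = ‖(y - x) + (x - x')‖ := by rw [sub_add_sub_cancel]
      _ ≤ _ := norm_add_le _ _
      _ ≤ 2 * r := by linarith)
  have h3 : ‖iteratedFDeriv ℝ j (peval (P - P')) y‖ ≤ 2 ^ (m - j) * A * (2 * r) ^ (m - j) := by
    have := decay (m := m) (peval (P - P')) (cP _) x (2 * r) A (by positivity) hA0 ?_ ?_ (m - j)
      (by omega) y (by rw [mem_closedBall_iff_norm]; linarith)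
    · rwa [show m - (m - j) = j by omega] at this
    · intro w
      rw [iteratedFDeriv_peval hm _ ((MvPolynomial.totalDegree_sub _ _).trans (max_le hP.1 hP'.1)),
        norm_zero]
      exact hA0
    · intro i hi
      have h := norm_iteratedFDeriv_le_mD (k := i) (peval (P - P')) (peval_contDiff _) x
        (M * (2 * r) ^ (m - i)) (by positivity) (by
          intro α hα
          refine (hPP α (by omega)).trans ?_
          rw [hα]
          gcongr
          linarith)
      refine h.trans ?_
      rw [hA, ← mul_assoc]
      gcongr
  have eH : F - F' = (F - peval P) + (peval (P - P')) - (F' - peval P') := by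
    have : peval (P - P') = peval P - peval P' := by funext w; simp [peval]
    rw [this]; abel
  have jle : ((j : ℕ) : WithTop ℕ∞) ≤ m := by exact_mod_cast hj
  have d1 : ContDiff ℝ j (F - peval P) := (cF.sub (cP _)).of_le jle
  have d2 : ContDiff ℝ j (F' - peval P') := (cF'.sub (cP _)).of_le jle
  have d3 : ContDiff ℝ j (peval (P - P')) := peval_contDiff _
  have d13 : ContDiff ℝ j (F - peval P + peval (P - P')) := d1.add d3
  rw [eH, iteratedFDeriv_sub_apply d13.contDiffAt d2.contDiffAt,
    iteratedFDeriv_add_apply d1.contDiffAt d3.contDiffAt]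
  have t1 := norm_sub_le (iteratedFDeriv ℝ j (F - peval P) y + iteratedFDeriv ℝ j (peval (P - P')) y)
    (iteratedFDeriv ℝ j (F' - peval P') y)
  have t2 := norm_add_le (iteratedFDeriv ℝ j (F - peval P) y) (iteratedFDeriv ℝ j (peval (P - P')) y)
  have e4 : (2 : ℝ) ^ (m - j) * A * (2 * r) ^ (m - j) = 4 ^ (m - j) * A * r ^ (m - j) := by
    rw [mul_pow, show (4 : ℝ) = 2 * 2 by norm_num, mul_pow]; ring
  have e5 : (4 : ℝ) ^ (m - j) * A * r ^ (m - j) ≤ 4 ^ m * A * r ^ (m - j) := by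
    gcongr
    · norm_num
    · omega
  calc _ ≤ 3 * (4 ^ m * A * r ^ (m - j)) := by linarith
    _ = _ := by rw [hA]; ring

/-! ### Scaled bounds -/

/-- All derivatives of order `j ≤ m` of `f` at `y` are bounded by `A / δ ^ j`. -/
def SB {n : ℕ} (m : ℕ) (δ : ℝ) (f : Euc n → ℝ) (y : Euc n) (A : ℝ) : Prop :=
  ∀ j ≤ m, δ ^ j * ‖iteratedFDeriv ℝ j f y‖ ≤ A

lemma SB.congr {n m : ℕ} {δ A : ℝ} {f g : Euc n → ℝ} {y : Euc n} (h : SB m δ f y A)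
    (e : g =ᶠ[nhds y] f) : SB m δ g y A := by
  intro j hj
  rw [(e.iteratedFDeriv ℝ j).eq_of_nhds]
  exact h j hj

lemma SB.mono {n m : ℕ} {δ A B : ℝ} {f : Euc n → ℝ} {y : Euc n} (h : SB m δ f y A)
    (e : A ≤ B) : SB m δ f y B := fun j hj => (h j hj).trans e

lemma SB.sub {n m : ℕ} {δ A B : ℝ} (hδ : 0 ≤ δ) {f g : Euc n → ℝ} {y : Euc n}
    (cf : ContDiff ℝ m f) (cg : ContDiff ℝ m g) (hf : SB m δ f y A) (hg : SB m δ g y B) :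
    SB m δ (f - g) y (A + B) := by
  intro j hj
  have jle : ((j : ℕ) : WithTop ℕ∞) ≤ m := by exact_mod_cast hj
  rw [iteratedFDeriv_sub_apply (cf.of_le jle).contDiffAt (cg.of_le jle).contDiffAt]
  calc _ ≤ δ ^ j * (‖iteratedFDeriv ℝ j f y‖ + ‖iteratedFDeriv ℝ j g y‖) := by
        gcongr; exact norm_sub_le _ _
    _ ≤ A + B := by rw [mul_add]; exact add_le_add (hf j hj) (hg j hj)

lemma SB.add {n m : ℕ} {δ A B : ℝ} (hδ : 0 ≤ δ) {f g : Euc n → ℝ} {y : Euc n}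
    (cf : ContDiff ℝ m f) (cg : ContDiff ℝ m g) (hf : SB m δ f y A) (hg : SB m δ g y B) :
    SB m δ (f + g) y (A + B) := by
  intro j hj
  have jle : ((j : ℕ) : WithTop ℕ∞) ≤ m := by exact_mod_cast hj
  rw [iteratedFDeriv_add_apply (cf.of_le jle).contDiffAt (cg.of_le jle).contDiffAt]
  calc _ ≤ δ ^ j * (‖iteratedFDeriv ℝ j f y‖ + ‖iteratedFDeriv ℝ j g y‖) := by
        gcongr; exact norm_add_le _ _
    _ ≤ A + B := by rw [mul_add]; exact add_le_add (hf j hj) (hg j hj)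

lemma SB.mul {n m : ℕ} {δ A B : ℝ} (hδ : 0 ≤ δ) {f g : Euc n → ℝ} {y : Euc n}
    (cf : ContDiff ℝ m f) (cg : ContDiff ℝ m g) (hf : SB m δ f y A) (hg : SB m δ g y B) :
    SB m δ (fun z => f z * g z) y (2 ^ m * A * B) := by
  intro j hj
  have hA : 0 ≤ A := le_trans (by positivity) (hf 0 (Nat.zero_le _))
  have hB : 0 ≤ B := le_trans (by positivity) (hg 0 (Nat.zero_le _))
  have jle : ((j : ℕ) : WithTop ℕ∞) ≤ m := by exact_mod_cast hj
  calc _ ≤ δ ^ j * ∑ i ∈ Finset.range (j + 1), (j.choose i : ℝ) * ‖iteratedFDeriv ℝ i f y‖ *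
          ‖iteratedFDeriv ℝ (j - i) g y‖ := by
        gcongr; exact norm_iteratedFDeriv_mul_le cf cg y jle
    _ ≤ ∑ i ∈ Finset.range (j + 1), (j.choose i : ℝ) * (A * B) := by
        rw [Finset.mul_sum]
        apply Finset.sum_le_sum
        intro i hi
        rw [Finset.mem_range] at hi
        have e : δ ^ j = δ ^ i * δ ^ (j - i) := by rw [← pow_add]; congr 1; omega
        have a1 := hf i (by omega)
        have a2 := hg (j - i) (by omega)
        calc _ = (j.choose i : ℝ) * ((δ ^ i * ‖iteratedFDeriv ℝ i f y‖) *
              (δ ^ (j - i) * ‖iteratedFDeriv ℝ (j - i) g y‖)) := by rw [e]; ring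
          _ ≤ _ := by
            apply mul_le_mul_of_nonneg_left _ (by positivity)
            exact mul_le_mul a1 a2 (by positivity) hA
    _ = 2 ^ j * (A * B) := by
        rw [← Finset.sum_mul]
        congr 1
        exact_mod_cast Nat.sum_range_choose j
    _ ≤ 2 ^ m * A * B := by
        rw [mul_assoc]
        apply mul_le_mul_of_nonneg_right _ (by positivity)
        exact pow_le_pow_right₀ (by norm_num) hj

lemma SB.sum {n m : ℕ} {δ A : ℝ} (hδ : 0 ≤ δ) {ι : Type*} (s : Finset ι) {f : ι → Euc n → ℝ}
    {y : Euc n} (cf : ∀ i ∈ s, ContDiff ℝ m (f i)) (hf : ∀ i ∈ s, SB m δ (f i) y A) :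
    SB m δ (fun z => ∑ i ∈ s, f i z) y (s.card * A) := by
  intro j hj
  have jle : ((j : ℕ) : WithTop ℕ∞) ≤ m := by exact_mod_cast hj
  rw [iteratedFDeriv_sum (fun i hi => (cf i hi).of_le jle), Finset.sum_apply]
  calc _ ≤ δ ^ j * ∑ i ∈ s, ‖iteratedFDeriv ℝ j (f i) y‖ := by gcongr; exact norm_sum_le _ _
    _ ≤ ∑ i ∈ s, A := by
      rw [Finset.mul_sum]; exact Finset.sum_le_sum (fun i hi => hf i hi j hj)
    _ = _ := by simp

/-- Sums with at most `K` locally nonvanishing terms. -/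
lemma SB.sum_active {n m K : ℕ} {δ A : ℝ} (hδ : 0 ≤ δ) (hA : 0 ≤ A) {ι : Type*} [DecidableEq ι]
    (t s : Finset ι)
    (hs : s ⊆ t) (hK : s.card ≤ K) {f : ι → Euc n → ℝ} {y : Euc n}
    (cf : ∀ i ∈ t, ContDiff ℝ m (f i)) (hf : ∀ i ∈ s, SB m δ (f i) y A)
    (hz : ∀ i ∈ t, i ∉ s → f i =ᶠ[nhds y] 0) :
    SB m δ (fun z => ∑ i ∈ t, f i z) y (K * A) := by
  have h1 : SB m δ (fun z => ∑ i ∈ s, f i z) y (K * A) := by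
    refine (SB.sum hδ s (fun i hi => cf i (hs hi)) hf).mono ?_
    gcongr
  refine h1.congr ?_
  have : ∀ᶠ z in nhds y, ∀ i ∈ t, i ∉ s → f i z = 0 := by
    rw [Filter.eventually_all_finset]
    intro i hi
    by_cases his : i ∈ s
    · simp [his]
    · filter_upwards [hz i hi his] with z hz' _
      exact hz'
  filter_upwards [this] with z hz'
  exact (Finset.sum_subset hs (fun i hi his => hz' i hi his)).symm

/-! ### A smooth partition of unity on a lattice of scale `δ` -/

/-- One-dimensional bump whose integer translates sum to one. -/
def psi (t : ℝ) : ℝ := Real.smoothTransition (t + 1) - Real.smoothTransition t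

lemma psi_nonneg (t : ℝ) : 0 ≤ psi t :=
  sub_nonneg.2 (Real.smoothTransition.monotone (by linarith))

lemma psi_zero {t : ℝ} (ht : 1 < |t|) : psi t = 0 := by
  unfold psi
  rcases lt_abs.1 ht with h | h
  · rw [Real.smoothTransition.one_of_one_le (by linarith),
      Real.smoothTransition.one_of_one_le (by linarith), sub_self]
  · rw [Real.smoothTransition.zero_of_nonpos (by linarith),
      Real.smoothTransition.zero_of_nonpos (by linarith), sub_self]

lemma psi_contDiff {m : ℕ} : ContDiff ℝ m psi := by
  have h : ContDiff ℝ ((m : ℕ∞) : WithTop ℕ∞) Real.smoothTransition :=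
    Real.smoothTransition.contDiff
  have h' : ContDiff ℝ (m : WithTop ℕ∞) Real.smoothTransition := by exact_mod_cast h
  exact (h'.comp (contDiff_id.add contDiff_const)).sub h'

lemma psi_sum (N : ℕ) (t : ℝ) (h1 : -N ≤ t) (h2 : t ≤ N) :
    ∑ k ∈ Finset.range (2 * N + 1), psi (t + N - k) = 1 := by
  have : ∀ k : ℕ, psi (t + N - k) = Real.smoothTransition (t + N - (k : ℕ) + 1) -
      Real.smoothTransition (t + N - ((k + 1 : ℕ) : ℝ) + 1) := by
    intro k
    unfold psi
    congr 2
    push_cast; ring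
  simp_rw [this]
  rw [Finset.sum_range_sub' (fun k : ℕ => Real.smoothTransition (t + N - (k : ℕ) + 1))]
  rw [Real.smoothTransition.one_of_one_le, Real.smoothTransition.zero_of_nonpos, sub_zero]
  · push_cast; linarith
  · push_cast; linarith

/-- The `n`-dimensional bump. -/
def bump {n : ℕ} (u : Euc n) : ℝ := ∏ i, psi (u i)

lemma norm_le_of_coord {n : ℕ} (hn : 0 < n) (u : Euc n) (a : ℝ) (ha : 0 ≤ a)
    (h : ∀ i, |u i| ≤ a) : ‖u‖ ≤ n * a := by
  rw [EuclideanSpace.norm_eq]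
  apply Real.sqrt_le_iff.2 ⟨by positivity, ?_⟩
  have hn1 : (1 : ℝ) ≤ n := by exact_mod_cast hn
  calc ∑ i, ‖u i‖ ^ 2 ≤ ∑ i : Fin n, a ^ 2 := by
        apply Finset.sum_le_sum
        intro i _
        rw [Real.norm_eq_abs]
        exact pow_le_pow_left₀ (abs_nonneg _) (h i) 2
    _ = n * a ^ 2 := by simp
    _ ≤ (n * a) ^ 2 := by nlinarith [mul_nonneg (sub_nonneg.2 hn1) (sq_nonneg a), sq_nonneg a]

lemma bump_contDiff {n m : ℕ} : ContDiff ℝ m (bump (n := n)) := by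
  unfold bump
  apply contDiff_prod
  intro i _
  exact psi_contDiff.comp (EuclideanSpace.proj i : Euc n →L[ℝ] ℝ).contDiff

lemma bump_zero {n : ℕ} (u : Euc n) (i : Fin n) (h : 1 < |u i|) : bump u = 0 :=
  Finset.prod_eq_zero (Finset.mem_univ i) (psi_zero h)

lemma bump_bound {n m : ℕ} (hn : 0 < n) : ∃ B : ℝ, 0 < B ∧
    ∀ j ≤ m, ∀ u : Euc n, ‖iteratedFDeriv ℝ j bump u‖ ≤ B := by
  have hc : HasCompactSupport (bump (n := n)) := by
    apply HasCompactSupport.intro (isCompact_closedBall (0 : Euc n) (n * 1))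
    intro u hu
    by_contra hne
    apply hu
    rw [mem_closedBall_zero_iff]
    apply norm_le_of_coord hn u 1 zero_le_one
    intro i
    by_contra hi
    exact hne (bump_zero u i (not_le.1 hi))
  have : ∀ j : ℕ, ∃ B : ℝ, ∀ u : Euc n, ‖iteratedFDeriv ℝ j bump u‖ ≤ B := by
    intro j
    exact (hc.iteratedFDeriv (𝕜 := ℝ) j).exists_bound_of_continuous
      ((bump_contDiff (m := j)).continuous_iteratedFDeriv le_rfl)
  choose B hB using this
  refine ⟨∑ j ∈ Finset.range (m + 1), |B j| + 1, by positivity, ?_⟩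
  intro j hj u
  have h1 : |B j| ≤ ∑ j ∈ Finset.range (m + 1), |B j| :=
    Finset.single_le_sum (f := fun j => |B j|) (fun _ _ => abs_nonneg _)
      (Finset.mem_range.2 (by omega))
  linarith [hB j u, le_abs_self (B j)]

lemma bump_scaled {n m : ℕ} (hn : 0 < n) {B : ℝ} (hB : 0 < B)
    (h : ∀ j ≤ m, ∀ u : Euc n, ‖iteratedFDeriv ℝ j bump u‖ ≤ B) (δ : ℝ) (hδ : 0 < δ)
    (a y : Euc n) :
    SB m δ (fun z => bump (((4 * n) / δ : ℝ) • z + a)) y ((4 * n) ^ m * B) := by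
  intro j hj
  set L : Euc n →L[ℝ] Euc n := ((4 * n) / δ : ℝ) • ContinuousLinearMap.id ℝ (Euc n) with hL
  have hn1 : (1 : ℝ) ≤ n := by exact_mod_cast hn
  have e : (fun z => bump (((4 * n) / δ : ℝ) • z + a)) = (fun w => bump (w + a)) ∘ L := by
    funext z; simp [hL]
  have c : ContDiff ℝ j (fun w : Euc n => bump (w + a)) :=
    bump_contDiff.comp (contDiff_id.add contDiff_const)
  rw [e, L.iteratedFDeriv_comp_right c y le_rfl, iteratedFDeriv_comp_add_right]
  have nL : ‖L‖ ≤ (4 * n) / δ := by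
    rw [hL, norm_smul, Real.norm_of_nonneg (by positivity)]
    exact mul_le_of_le_one_right (by positivity) ContinuousLinearMap.norm_id_le
  calc _ ≤ δ ^ j * (B * ((4 * n) / δ) ^ j) := by
        gcongr
        refine (ContinuousMultilinearMap.norm_compContinuousLinearMap_le _ _).trans ?_
        simp only [Finset.prod_const, Finset.card_univ, Fintype.card_fin]
        gcongr
        exact h j hj _
    _ = (4 * n) ^ j * B := by
        rw [div_pow]; field_simp
    _ ≤ _ := by
        gcongr
        linarith

lemma exists_pu (m n : ℕ) (hn : 0 < n) : ∃ (K : ℕ) (B : ℝ), 0 < B ∧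
    ∀ δ : ℝ, 0 < δ → ∀ R : ℝ, 0 < R →
    ∃ (t : Finset (Fin n → ℕ)) (φ : (Fin n → ℕ) → Euc n → ℝ) (c : (Fin n → ℕ) → Euc n),
      (∀ i, ContDiff ℝ m (φ i)) ∧ (∀ i y, 0 ≤ φ i y) ∧ (∀ i y, SB m δ (φ i) y B) ∧
      (∀ y, ‖y‖ < R → ∑ i ∈ t, φ i y = 1) ∧
      (∀ y, ∃ s ⊆ t, s.card ≤ K ∧ (∀ i ∈ s, ‖y - c i‖ ≤ δ / 4) ∧
        ∀ i ∈ t, i ∉ s → φ i =ᶠ[nhds y] 0) := by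
  obtain ⟨B, hB, hBb⟩ := bump_bound (n := n) (m := m) hn
  have hn1 : (1 : ℝ) ≤ n := by exact_mod_cast hn
  refine ⟨3 ^ n, (4 * n) ^ m * B, by positivity, ?_⟩
  intro δ hδ R hR
  set g : ℝ := (4 * n) / δ with hg
  have hg0 : 0 < g := by positivity
  obtain ⟨N, hN⟩ := exists_nat_gt (g * R)
  set a : (Fin n → ℕ) → Euc n := fun z => WithLp.toLp 2 (fun i => (N : ℝ) - z i) with ha
  have haz : ∀ z i, a z i = N - z i := fun z i => rfl
  refine ⟨Fintype.piFinset fun _ => Finset.range (2 * N + 1), fun z y => bump (g • y + a z),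
    fun z => - (g⁻¹ • a z), ?_, ?_, ?_, ?_, ?_⟩
  · intro z
    exact bump_contDiff.comp ((contDiff_id.const_smul g).add contDiff_const)
  · intro z y
    exact Finset.prod_nonneg (fun i _ => psi_nonneg _)
  · intro z y
    exact bump_scaled hn hB hBb δ hδ (a z) y
  · intro y hy
    have h1 : ∀ i, ∑ k ∈ Finset.range (2 * N + 1), psi (g * y i + N - k) = 1 := by
      intro i
      have h2 : |g * y i| ≤ N := by
        rw [abs_mul, abs_of_pos hg0]
        refine le_trans ?_ hN.le
        have := PiLp.norm_apply_le y i
        rw [Real.norm_eq_abs] at this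
        exact mul_le_mul_of_nonneg_left (this.trans hy.le) hg0.le
      exact psi_sum N _ (abs_le.1 h2).1 (abs_le.1 h2).2
    have h3 := Finset.prod_univ_sum (fun _ : Fin n => Finset.range (2 * N + 1))
      (fun i k => psi (g * y i + N - k))
    simp only [h1, Finset.prod_const_one] at h3
    rw [h3]
    apply Finset.sum_congr rfl
    intro z _
    unfold bump
    apply Finset.prod_congr rfl
    intro i _
    congr 1
    simp [haz]; ring
  · intro y
    classical
    refine ⟨(Fintype.piFinset fun _ => Finset.range (2 * N + 1)).filter
      (fun z => ∀ i, |g * y i + (N - z i)| ≤ 1), Finset.filter_subset _ _, ?_, ?_, ?_⟩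
    · calc _ ≤ (Fintype.piFinset fun i : Fin n =>
            Finset.Icc ⌈g * y i + N - 1⌉₊ (⌈g * y i + N - 1⌉₊ + 2)).card := by
            apply Finset.card_le_card
            intro z hz
            rw [Finset.mem_filter] at hz
            rw [Fintype.mem_piFinset]
            intro i
            have := abs_le.1 (hz.2 i)
            rw [Finset.mem_Icc]
            constructor
            · apply Nat.ceil_le.2; linarith
            · have h := Nat.le_ceil (g * y i + N - 1)
              have : (z i : ℝ) ≤ (⌈g * y i + N - 1⌉₊ + 2 : ℕ) := by push_cast; linarith
              exact_mod_cast this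
        _ = 3 ^ n := by
            rw [Fintype.card_piFinset]
            simp only [Nat.card_Icc]
            rw [Finset.prod_congr rfl (g := fun _ => 3) (by intro i _; omega)]
            simp
    · intro z hz
      rw [Finset.mem_filter] at hz
      have e : y - -(g⁻¹ • a z) = g⁻¹ • (g • y + a z) := by
        rw [smul_add, smul_smul, inv_mul_cancel₀ hg0.ne', one_smul, sub_neg_eq_add]
      have h1 : ‖g • y + a z‖ ≤ n * 1 := by
        apply norm_le_of_coord hn _ 1 zero_le_one
        intro i
        simpa [haz] using hz.2 i
      rw [e, norm_smul, norm_inv, Real.norm_of_nonneg hg0.le]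
      calc g⁻¹ * ‖g • y + a z‖ ≤ g⁻¹ * (n * 1) := by gcongr
        _ = δ / 4 := by rw [hg]; field_simp
    · intro z hz hzs
      rw [Finset.mem_filter] at hzs
      have : ∃ i, 1 < |g * y i + (N - z i)| := by
        by_contra hcon
        push Not at hcon
        exact hzs ⟨hz, hcon⟩
      obtain ⟨i, hi⟩ := this
      have hcont : Continuous (fun w : Euc n => |g * w i + ((N : ℝ) - z i)|) := by fun_prop
      have := hcont.continuousAt.eventually (lt_mem_nhds hi)
      filter_upwards [this] with w hw
      apply bump_zero _ i
      simpa [haz] using hw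

lemma SB.rescale {n m : ℕ} {δ A : ℝ} (hδ : 0 < δ) {f : Euc n → ℝ} {y : Euc n} (h : SB m δ f y A) :
    SB m (4 * δ) f y (4 ^ m * A) := by
  intro j hj
  have hA : 0 ≤ A := le_trans (by positivity) (h 0 (Nat.zero_le _))
  calc _ = 4 ^ j * (δ ^ j * ‖iteratedFDeriv ℝ j f y‖) := by rw [mul_pow]; ring
    _ ≤ 4 ^ j * A := by gcongr; exact h j hj
    _ ≤ 4 ^ m * A := by
      gcongr
      norm_num

lemma SB.to_one {n m : ℕ} {δ c : ℝ} (hδ : 0 < δ) (hδ1 : δ ≤ 1) (hc : 0 ≤ c) {f : Euc n → ℝ}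
    {y : Euc n} (h : SB m δ f y (c * δ ^ m)) : SB m 1 f y c := by
  intro j hj
  rw [one_pow, one_mul]
  have h1 := h j hj
  have e : δ ^ m = δ ^ j * δ ^ (m - j) := by rw [← pow_add]; congr 1; omega
  have h2 : δ ^ j * ‖iteratedFDeriv ℝ j f y‖ ≤ δ ^ j * c := by
    refine h1.trans ?_
    rw [e]
    have : δ ^ (m - j) ≤ 1 := pow_le_one₀ hδ.le hδ1
    calc c * (δ ^ j * δ ^ (m - j)) ≤ c * (δ ^ j * 1) := by gcongr
      _ = _ := by ring
  exact le_of_mul_le_mul_left h2 (by positivity)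

/-- The hypotheses on the family of local extensions. -/
structure Family (m n : ℕ) (E : Set (Euc n)) (f : Euc n → Euc n → ℝ) (A : ℝ) : Prop where
  fin : E.Finite
  ne : E.Nonempty
  pos : 0 < A
  smooth : ∀ x ∈ E, ContDiff ℝ m (f x)
  nonneg : ∀ x ∈ E, ∀ y, 0 ≤ f x y
  bound : ∀ x ∈ E, ∀ y, SB m 1 (f x) y A
  cmp : ∀ x ∈ E, ∀ x' ∈ E, ∀ r : ℝ, ‖x - x'‖ ≤ r → ∀ y, ‖y - x‖ ≤ r → ∀ j ≤ m,
    ‖iteratedFDeriv ℝ j (f x - f x') y‖ ≤ A * r ^ (m - j)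

/-- What is achieved at a single scale. -/
structure Scale (m n : ℕ) (E : Set (Euc n)) (f : Euc n → Euc n → ℝ) (A R C₁ C₂ δ : ℝ)
    (G η : Euc n → ℝ) : Prop where
  cG : ContDiff ℝ m G
  cη : ContDiff ℝ m η
  G0 : ∀ y, 0 ≤ G y
  η0 : ∀ y, 0 ≤ η y
  η1 : ∀ y, ‖y‖ < R → η y ≤ 1
  sη : ∀ y, SB m δ η y C₁
  ηone : ∀ y, ‖y‖ < R → Metric.infDist y E ≤ δ → η y = 1
  ηzero : ∀ y, 2 * δ ≤ Metric.infDist y E → η y = 0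
  sG : ∀ x ∈ E, ∀ y, ‖y‖ < R → ‖y - x‖ ≤ 32 * δ → SB m δ (G - f x) y (C₂ * A * δ ^ m)
  Geq : ∀ x ∈ E, (∀ x' ∈ E, x' ≠ x → 4 * δ ≤ ‖x - x'‖) → ∀ y, ‖y‖ < R → ‖y - x‖ ≤ δ →
    G y = f x y

lemma exists_scale (m n : ℕ) (hn : 0 < n) : ∃ C₁ C₂ : ℝ, 0 < C₁ ∧ 0 < C₂ ∧
    ∀ (E : Set (Euc n)) (f : Euc n → Euc n → ℝ) (A : ℝ), Family m n E f A →
    ∀ R : ℝ, 0 < R → ∀ δ : ℝ, 0 < δ → ∃ G η : Euc n → ℝ, Scale m n E f A R C₁ C₂ δ G η := by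
  classical
  obtain ⟨K, B, hB, hpu⟩ := exists_pu m n hn
  refine ⟨K * B + 1, K * (2 ^ m * B * 66 ^ m) + 1, by positivity, by positivity, ?_⟩
  intro E f A hF R hR δ hδ
  obtain ⟨t, φ, c, hφc, hφ0, hφs, hφ1, hφa⟩ := hpu δ hδ R hR
  have hp : ∀ y, ∃ x ∈ E, Metric.infDist y E = dist y x :=
    fun y => hF.fin.isCompact.exists_infDist_eq_dist hF.ne y
  choose p hpE hpd using hp
  have hA := hF.pos
  -- membership in the active set
  have hact : ∀ y (i), i ∈ t → φ i y ≠ 0 → ‖y - c i‖ ≤ δ / 4 := by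
    intro y i hi hne
    obtain ⟨s, hst, -, hs1, hs2⟩ := hφa y
    by_contra hcon
    exact hne ((hs2 i hi (fun his => hcon (hs1 i his))).eq_of_nhds)
  set t' := t.filter (fun i => Metric.infDist (c i) E ≤ 3 * δ / 2) with ht'
  refine ⟨fun y => ∑ i ∈ t, φ i y * f (p (c i)) y, fun y => ∑ i ∈ t', φ i y, ?_⟩
  constructor
  · exact ContDiff.sum (fun i _ => (hφc i).mul (hF.smooth _ (hpE _)))
  · exact ContDiff.sum (fun i _ => hφc i)
  · intro y
    exact Finset.sum_nonneg (fun i _ => mul_nonneg (hφ0 i y) (hF.nonneg _ (hpE _) y))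
  · intro y
    exact Finset.sum_nonneg (fun i _ => hφ0 i y)
  · intro y hy
    rw [← hφ1 y hy]
    exact Finset.sum_le_sum_of_subset_of_nonneg (Finset.filter_subset _ _) (fun i _ _ => hφ0 i y)
  · intro y
    obtain ⟨s, hst, hK, hs1, hs2⟩ := hφa y
    have := SB.sum_active (m := m) (K := K) hδ.le hB.le t' (s ∩ t') Finset.inter_subset_right
      ((Finset.card_le_card Finset.inter_subset_left).trans hK) (f := φ) (y := y)
      (fun i _ => hφc i) (fun i _ => hφs i y) (by
        intro i hi hni
        apply hs2 i (Finset.filter_subset _ _ hi)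
        intro his
        exact hni (Finset.mem_inter.2 ⟨his, hi⟩))
    exact this.mono (by linarith)
  · intro y hy hd
    rw [← hφ1 y hy]
    apply Finset.sum_subset (Finset.filter_subset _ _)
    intro i hi hni
    by_contra hne
    apply hni
    refine Finset.mem_filter.2 ?_
    refine ⟨hi, ?_⟩
    have h1 := hact y i hi hne
    have h2 := Metric.infDist_le_infDist_add_dist (s := E) (x := c i) (y := y)
    rw [dist_comm, dist_eq_norm] at h2
    linarith
  · intro y hd
    apply Finset.sum_eq_zero
    intro i hi
    by_contra hne
    have hi := Finset.mem_filter.1 hi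
    have h1 := hact y i hi.1 hne
    have h2 := Metric.infDist_le_infDist_add_dist (s := E) (x := y) (y := c i)
    rw [dist_eq_norm] at h2
    linarith [hi.2]
  · intro x hx y hy hxy
    obtain ⟨s, hst, hK, hs1, hs2⟩ := hφa y
    have key := SB.sum_active (m := m) (K := K) (A := 2 ^ m * B * (66 ^ m * A * δ ^ m)) hδ.le
      (by positivity) t s hst hK
      (f := fun i z => φ i z * (f (p (c i)) - f x) z) (y := y)
      (fun i _ => (hφc i).mul ((hF.smooth _ (hpE _)).sub (hF.smooth _ hx))) (by
        intro i hi
        apply SB.mul hδ.le (hφc i) ((hF.smooth _ (hpE _)).sub (hF.smooth _ hx)) (hφs i y)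
        intro j hj
        have h1 := hs1 i hi
        have h2 : ‖c i - p (c i)‖ ≤ ‖c i - x‖ := by
          rw [← dist_eq_norm, ← dist_eq_norm, ← hpd]
          exact Metric.infDist_le_dist_of_mem hx
        have h3 : ‖c i - x‖ ≤ ‖y - c i‖ + ‖y - x‖ := by
          rw [norm_sub_rev y (c i)]
          exact norm_sub_le_norm_sub_add_norm_sub _ _ _
        have h4 : ‖y - p (c i)‖ ≤ ‖y - c i‖ + ‖c i - p (c i)‖ :=
          norm_sub_le_norm_sub_add_norm_sub _ _ _
        have h5 : ‖p (c i) - x‖ ≤ ‖y - p (c i)‖ + ‖y - x‖ := by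
          rw [norm_sub_rev y (p (c i))]
          exact norm_sub_le_norm_sub_add_norm_sub _ _ _
        have h6 := hF.cmp (p (c i)) (hpE _) x hx (66 * δ) (by linarith) y (by linarith) j hj
        calc _ ≤ δ ^ j * (A * (66 * δ) ^ (m - j)) := by gcongr; exact h6
          _ = 66 ^ (m - j) * A * (δ ^ j * δ ^ (m - j)) := by rw [mul_pow]; ring
          _ = 66 ^ (m - j) * A * δ ^ m := by rw [← pow_add, Nat.add_sub_cancel' hj]
          _ ≤ 66 ^ m * A * δ ^ m := by
            gcongr
            · norm_num
            · omega) (by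
        intro i hi his
        filter_upwards [hs2 i hi his] with z hz
        simp [hz])
    refine (key.congr ?_).mono ?_
    · have : ∀ᶠ z in nhds y, ‖z‖ < R := continuous_norm.continuousAt.eventually (gt_mem_nhds hy)
      filter_upwards [this] with z hz
      simp only [Pi.sub_apply, mul_sub, Finset.sum_sub_distrib]
      rw [← Finset.sum_mul, hφ1 z hz, one_mul]
    · have : 0 ≤ A * δ ^ m := by positivity
      calc _ = (K * (2 ^ m * B * 66 ^ m)) * (A * δ ^ m) := by ring
        _ ≤ (K * (2 ^ m * B * 66 ^ m) + 1) * (A * δ ^ m) := by gcongr; linarith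
        _ = _ := by ring
  · intro x hx hsep y hy hxy
    have : ∀ i ∈ t, φ i y * f (p (c i)) y = φ i y * f x y := by
      intro i hi
      by_cases hne : φ i y = 0
      · simp [hne]
      · have h1 := hact y i hi hne
        have h2 : ‖c i - p (c i)‖ ≤ ‖c i - x‖ := by
          rw [← dist_eq_norm, ← dist_eq_norm, ← hpd]
          exact Metric.infDist_le_dist_of_mem hx
        have h3 : ‖c i - x‖ ≤ ‖y - c i‖ + ‖y - x‖ := by
          rw [norm_sub_rev y (c i)]
          exact norm_sub_le_norm_sub_add_norm_sub _ _ _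
        have h5 : ‖x - p (c i)‖ ≤ ‖c i - x‖ + ‖c i - p (c i)‖ := by
          rw [norm_sub_rev (c i) x]
          exact norm_sub_le_norm_sub_add_norm_sub _ _ _
        have : p (c i) = x := by
          by_contra hcon
          have := hsep (p (c i)) (hpE _) hcon
          linarith
        rw [this]
    change ∑ i ∈ t, φ i y * f (p (c i)) y = _
    rw [Finset.sum_congr rfl this, ← Finset.sum_mul, hφ1 y hy, one_mul]

/-! ### Gluing the scales -/

/-- Glue the functions `G k` of the different scales with the cutoffs `η k`. -/
def glue {n : ℕ} (G η : ℕ → Euc n → ℝ) : ℕ → Euc n → ℝ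
  | 0 => G 0
  | k + 1 => fun y => (1 - η (k + 1) y) * G (k + 1) y + η (k + 1) y * glue G η k y

lemma exists_sep {n : ℕ} {E : Set (Euc n)} (hE : E.Finite) :
    ∃ ε : ℝ, 0 < ε ∧ ∀ x ∈ E, ∀ x' ∈ E, x' ≠ x → ε ≤ ‖x - x'‖ := by
  by_cases h : E.Nontrivial
  · refine ⟨E.infsep, (hE.infsep_pos_iff_nontrivial).2 h, ?_⟩
    intro x hx x' hx' hne
    rw [← dist_eq_norm]
    exact Set.infsep_le_dist_of_mem hx hx' hne.symm
  · rw [Set.not_nontrivial_iff] at h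
    exact ⟨1, one_pos, fun x hx x' hx' hne => absurd (h hx' hx) hne⟩

lemma assemble (m n : ℕ) (hn : 0 < n) : ∃ C : ℝ, 0 < C ∧
    ∀ (E : Set (Euc n)) (f : Euc n → Euc n → ℝ) (A : ℝ), Family m n E f A →
    ∃ F : Euc n → ℝ, ContDiff ℝ m F ∧ (∀ y, 0 ≤ F y) ∧ (∀ y, SB m 1 F y (C * A)) ∧
      ∀ x ∈ E, F =ᶠ[nhds x] f x := by
  obtain ⟨C₁, C₂, hC₁, hC₂, hsc⟩ := exists_scale m n hn
  set C₃ : ℝ := C₂ + 2 ^ m * C₁ * (C₂ + C₂) with hC₃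
  have hC₃0 : 0 < C₃ := by positivity
  refine ⟨2 ^ m * C₁ * (1 + C₃), by positivity, ?_⟩
  intro E f A hF
  have hA := hF.pos
  obtain ⟨ε, hε, hsep⟩ := exists_sep hF.fin
  obtain ⟨r₀, hr₀⟩ := hF.fin.isBounded.exists_norm_le
  obtain ⟨N, hN⟩ := exists_pow_lt_of_lt_one (show (0 : ℝ) < ε / 4 by positivity)
    (show (1 / 4 : ℝ) < 1 by norm_num)
  set R : ℝ := |r₀| + 40 with hR
  have hR0 : 0 < R := by positivity
  set δ : ℕ → ℝ := fun k => 4 ^ k * (1 / 4) ^ N with hδ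
  have hδ0 : ∀ k, 0 < δ k := fun k => by positivity
  have hδs : ∀ k, δ (k + 1) = 4 * δ k := fun k => by simp only [hδ, pow_succ]; ring
  have hδN : δ N = 1 := by simp only [hδ]; rw [← mul_pow]; norm_num
  have hδmono : ∀ k l, k ≤ l → δ k ≤ δ l := by
    intro k l hkl
    simp only [hδ]
    gcongr
    norm_num
  have hex : ∀ k, ∃ G η : Euc n → ℝ, Scale m n E f A R C₁ C₂ (δ k) G η :=
    fun k => hsc E f A hF R hR0 (δ k) (hδ0 k)
  choose G η hS using hex
  have nearR : ∀ y, ‖y‖ < R → ∀ᶠ z in nhds y, ‖z‖ < R := fun y hy =>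
    (continuous_norm (E := Euc n)).continuousAt.eventually (gt_mem_nhds hy)
  have cd : Continuous (fun y : Euc n => Metric.infDist y E) := Metric.continuous_infDist_pt E
  have hp : ∀ y, ∃ x ∈ E, Metric.infDist y E = ‖y - x‖ := by
    intro y
    obtain ⟨x, hx, h⟩ := hF.fin.isCompact.exists_infDist_eq_dist hF.ne y
    exact ⟨x, hx, by rw [h, dist_eq_norm]⟩
  have inR : ∀ y, Metric.infDist y E ≤ 8 → ‖y‖ < R := by
    intro y hy
    obtain ⟨x, hx, h⟩ := hp y
    have h1 := hr₀ x hx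
    have h2 := norm_le_norm_sub_add y x
    have h3 := le_abs_self r₀
    linarith
  have gsmooth : ∀ k, ContDiff ℝ m (glue G η k) := by
    intro k
    induction k with
    | zero => exact (hS 0).cG
    | succ k ih =>
      exact ((contDiff_const.sub (hS (k + 1)).cη).mul (hS (k + 1)).cG).add ((hS (k + 1)).cη.mul ih)
  have gnonneg : ∀ k y, ‖y‖ < R → 0 ≤ glue G η k y := by
    intro k y hy
    induction k with
    | zero => exact (hS 0).G0 y
    | succ k ih =>
      exact add_nonneg (mul_nonneg (sub_nonneg.2 ((hS (k + 1)).η1 y hy)) ((hS (k + 1)).G0 y))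
        (mul_nonneg ((hS (k + 1)).η0 y) ih)
  have gstep : ∀ k y, ‖y‖ < R → Metric.infDist y E ≤ δ (k + 1) →
      glue G η (k + 1) y = glue G η k y := by
    intro k y hy hd
    have := (hS (k + 1)).ηone y hy hd
    simp [glue, this]
  have gnear : ∀ k y, ‖y‖ < R → Metric.infDist y E ≤ δ 0 → glue G η k y = G 0 y := by
    intro k y hy hd
    induction k with
    | zero => rfl
    | succ k ih => rw [gstep k y hy (hd.trans (hδmono _ _ (by omega))), ih]
  have gfar : ∀ k y, 2 * δ k ≤ Metric.infDist y E → glue G η k y = G k y := by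
    intro k y hd
    cases k with
    | zero => rfl
    | succ k =>
      have := (hS (k + 1)).ηzero y hd
      simp [glue, this]
  have gbound : ∀ k, k ≤ N → ∀ y, Metric.infDist y E ≤ 8 * δ k →
      SB m 1 (glue G η k) y ((1 + C₃) * A) := by
    intro k
    induction k with
    | zero =>
      intro _ y hd
      have hδ1 : δ 0 ≤ 1 := hδN ▸ hδmono 0 N (by omega)
      have hy : ‖y‖ < R := inR y (by linarith)
      obtain ⟨x, hx, hxd⟩ := hp y
      have h1 := (hS 0).sG x hx y hy (by linarith [hδ0 0])
      have h2 := h1.to_one (hδ0 0) hδ1 (by positivity)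
      have h3 := SB.add zero_le_one (hF.smooth x hx) ((hS 0).cG.sub (hF.smooth x hx))
        (hF.bound x hx y) h2
      refine (h3.congr ?_).mono ?_
      · filter_upwards with z
        simp [glue]
      · have : C₂ * A ≤ C₃ * A := by
          gcongr
          rw [hC₃]
          have : 0 ≤ 2 ^ m * C₁ * (C₂ + C₂) := by positivity
          linarith
        linarith
    | succ k ih =>
      intro hk y hd
      have hδ1 : δ (k + 1) ≤ 1 := hδN ▸ hδmono (k + 1) N hk
      have hy : ‖y‖ < R := inR y (by linarith)
      have e4 := hδs k
      have hk0 := hδ0 k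
      by_cases hcase : Metric.infDist y E < δ (k + 1)
      · refine (ih (by omega) y (by linarith)).congr ?_
        filter_upwards [nearR y hy, cd.continuousAt.eventually (gt_mem_nhds hcase)] with z hz hz'
        exact gstep k z hz hz'.le
      · rw [not_lt] at hcase
        obtain ⟨x, hx, hxd⟩ := hp y
        have cfx := hF.smooth x hx
        have a1 := (hS (k + 1)).sG x hx y hy (by linarith)
        have a2 := ((hS k).sG x hx y hy (by linarith)).rescale hk0
        rw [← e4] at a2
        have a2' : SB m (δ (k + 1)) (G k - f x) y (C₂ * A * δ (k + 1) ^ m) :=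
          a2.mono (by rw [e4, mul_pow]; apply le_of_eq; ring)
        have d1 : ContDiff ℝ m (G (k + 1) - f x) := (hS (k + 1)).cG.sub cfx
        have d2 : ContDiff ℝ m (G k - f x) := (hS k).cG.sub cfx
        have d3 : ContDiff ℝ m ((G k - f x) - (G (k + 1) - f x)) := d2.sub d1
        have a3 := SB.sub (hδ0 _).le d2 d1 a2' a1
        have a4 := SB.mul (hδ0 _).le (hS (k + 1)).cη d3 ((hS (k + 1)).sη y) a3
        have a5 := SB.add (hδ0 _).le d1 ((hS (k + 1)).cη.mul d3) a1 a4
        have a6 := (a5.mono (B := (C₃ * A) * δ (k + 1) ^ m)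
          (by rw [hC₃]; apply le_of_eq; ring)).to_one (hδ0 _) hδ1 (by positivity)
        have a7 := SB.add zero_le_one cfx (d1.add ((hS (k + 1)).cη.mul d3)) (hF.bound x hx y) a6
        refine (a7.congr ?_).mono (by apply le_of_eq; ring)
        have hfar : 2 * δ k < Metric.infDist y E := by linarith
        filter_upwards [cd.continuousAt.eventually (lt_mem_nhds hfar)] with z hz
        have := gfar k z hz.le
        simp only [glue, this, Pi.add_apply, Pi.sub_apply]
        ring
  refine ⟨fun y => η N y * glue G η N y, (hS N).cη.mul (gsmooth N), ?_, ?_, ?_⟩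
  · intro y
    by_cases hd : 2 * δ N ≤ Metric.infDist y E
    · simp [(hS N).ηzero y hd]
    · rw [not_le, hδN] at hd
      exact mul_nonneg ((hS N).η0 y) (gnonneg N y (inR y (by linarith)))
  · intro y
    by_cases hd : Metric.infDist y E ≤ 8
    · have s1 := (hS N).sη y
      rw [hδN] at s1
      have := SB.mul zero_le_one (hS N).cη (gsmooth N) s1 (gbound N le_rfl y (by linarith))
      exact this.mono (by apply le_of_eq; ring)
    · rw [not_le] at hd
      have h0 : SB m 1 (0 : Euc n → ℝ) y (2 ^ m * C₁ * (1 + C₃) * A) := by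
        intro j _
        have : iteratedFDeriv ℝ j (0 : Euc n → ℝ) y = 0 := by
          simp
        rw [this, norm_zero, mul_zero]
        positivity
      refine h0.congr ?_
      filter_upwards [cd.continuousAt.eventually (lt_mem_nhds hd)] with z hz
      simp [(hS N).ηzero z (by linarith)]
  · intro x hx
    have hx0 : Metric.infDist x E = 0 := Metric.infDist_zero_of_mem hx
    have hxR : ‖x‖ < R := inR x (by linarith)
    filter_upwards [nearR x hxR, Metric.ball_mem_nhds x (hδ0 0)] with z hz hzb
    rw [mem_ball_iff_norm] at hzb
    have hd : Metric.infDist z E ≤ δ 0 := by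
      have := Metric.infDist_le_dist_of_mem (x := z) hx
      rw [dist_eq_norm] at this
      linarith
    rw [gnear N z hz hd, (hS N).ηone z hz (hd.trans (hδmono _ _ (by omega))), one_mul]
    apply (hS 0).Geq x hx _ z hz hzb.le
    intro x' hx' hne
    refine le_trans ?_ (hsep x hx x' hx' hne)
    simp only [hδ, pow_zero, one_mul]
    linarith

end WhitneyNonneg

/-- **Lemma 2.2**: Whitney extension keeping nonnegativity, `C^m` version. -/
theorem whitney_extension_nonneg_Cm (m n : ℕ) (hm : 0 < m) (hn : 0 < n) :
    ∃ C : ℝ, 0 < C ∧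
      ∀ (E : Set (Euc n)), E.Finite → ∀ P : Euc n → MPoly n, ∀ M : ℝ, 0 < M →
        (∀ x ∈ E, MvPolynomial.totalDegree (P x) ≤ m - 1) →
        (∀ x ∈ E, P x ∈ GammaStar m n x M) →
        (∀ x ∈ E, ∀ x' ∈ E, ∀ β : Fin n → ℕ, deg β ≤ m - 1 →
          |mD β (peval (P x - P x')) x| ≤ M * ‖x - x'‖ ^ (m - deg β)) →
        ∃ F : Euc n → ℝ, CmNormLe m n F (C * M) ∧ (∀ y, 0 ≤ F y) ∧
          ∀ x ∈ E, IsJetAt m n F x (P x) := by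
  obtain ⟨C, hC, H⟩ := WhitneyNonneg.assemble m n hn
  have hn1 : (1 : ℝ) ≤ n := by exact_mod_cast hn
  set D : ℝ := 3 * 4 ^ m * (n : ℝ) ^ m with hD
  have hD0 : 0 < D := by positivity
  refine ⟨C * D, by positivity, ?_⟩
  intro E hE P M hM hdeg hΓ hW
  rcases E.eq_empty_or_nonempty with hemp | hne
  · subst hemp
    refine ⟨fun _ => 0, ⟨contDiff_const, ?_⟩, fun _ => le_rfl, by simp⟩
    intro α _ x
    have h := WhitneyNonneg.abs_mD_le α (fun _ : Euc n => (0 : ℝ)) contDiff_const x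
    have h0 : iteratedFDeriv ℝ (deg α) (fun _ : Euc n => (0 : ℝ)) x = 0 := by simp
    rw [h0, norm_zero] at h
    exact h.trans (by positivity)
  · choose! f hf using hΓ
    have hfam : WhitneyNonneg.Family m n E f (D * M) := by
      refine ⟨hE, hne, by positivity, ?_, ?_, ?_, ?_⟩
      · intro x hx
        exact_mod_cast (hf x hx).1.1
      · intro x hx y
        exact (hf x hx).2.1 y
      · intro x hx y j hj
        have c : ContDiff ℝ m (f x) := by exact_mod_cast (hf x hx).1.1
        rw [one_pow, one_mul]
        refine (WhitneyNonneg.norm_iteratedFDeriv_le_mD (f x) (c.of_le (by exact_mod_cast hj)) y M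
          hM.le (fun α hα => (hf x hx).1.2 α (by omega) y)).trans ?_
        have h1 : (n : ℝ) ^ j ≤ (n : ℝ) ^ m := pow_le_pow_right₀ hn1 hj
        have h2 : (1 : ℝ) ≤ 3 * 4 ^ m := by
          have : (1 : ℝ) ≤ 4 ^ m := one_le_pow₀ (by norm_num)
          linarith
        have h3 : (n : ℝ) ^ m ≤ D := le_mul_of_one_le_left (by positivity) h2
        exact mul_le_mul_of_nonneg_right (h1.trans h3) hM.le
      · intro x hx x' hx' r hr y hy j hj
        exact WhitneyNonneg.compare hm hn x x' (P x) (P x') (f x) (f x') M hM (hf x hx).1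
          (hf x' hx').1 (hf x hx).2.2 (hf x' hx').2.2 (hW x hx x' hx') r hr y hy j hj
    obtain ⟨F, cF, F0, Fb, Fe⟩ := H E f (D * M) hfam
    refine ⟨F, ⟨by exact_mod_cast cF, ?_⟩, F0, ?_⟩
    · intro α hα x
      have h1 := WhitneyNonneg.abs_mD_le α F (cF.of_le (by exact_mod_cast hα)) x
      have h2 := Fb x (deg α) hα
      rw [one_pow, one_mul] at h2
      calc _ ≤ _ := h1
        _ ≤ _ := h2
        _ = _ := by ring
    · intro x hx
      refine ⟨hdeg x hx, ?_⟩
      intro α hα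
      have hα' : deg α ≤ m := by omega
      have c : ContDiff ℝ m (f x) := by exact_mod_cast (hf x hx).1.1
      rw [(hf x hx).2.2.2 α hα]
      exact (WhitneyNonneg.mD_congr α F (f x) (cF.of_le (by exact_mod_cast hα'))
        (c.of_le (by exact_mod_cast hα')) x (Fe x hx)).symm

end
end

section
/- There is a constant C depending only on m and n such that the following holds: if P ∈ Γ₀⁺, then there exists F ∈ C^m(ℝⁿ) such that ‖F‖_{C^m(ℝⁿ)} ≤ C, F ≥ 0 everywhere on ℝⁿ, and J₀⁺(F) = P. -/
open scoped BigOperators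

noncomputable section

theorem peval_contDiff {n : ℕ} (P : MPoly n) (N : WithTop ℕ∞) : ContDiff ℝ N (peval P) := by
  induction P using MvPolynomial.induction_on with
  | C a => 
    have : peval (MvPolynomial.C a) = fun _ : Euc n => a := by funext x; simp [peval]
    rw [this]; exact contDiff_const
  | add p q hp hq =>
    have : peval (p + q) = fun x => peval p x + peval q x := by
      funext x; simp [peval]
    rw [this]; exact hp.add hq
  | mul_X p i hp =>
    have : peval (p * MvPolynomial.X i) = fun x => peval p x * (EuclideanSpace.proj i : Euc n →L[ℝ] ℝ) x := by
      funext x; simp [peval]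
    rw [this]; exact hp.mul (ContinuousLinearMap.contDiff _)

theorem pD_peval {n : ℕ} (i : Fin n) (P : MPoly n) :
    pD i (peval P) = peval (MvPolynomial.pderiv i P) := by
  induction P using MvPolynomial.induction_on with
  | C a =>
    have : peval (MvPolynomial.C a) = fun _ : Euc n => a := by funext x; simp [peval]
    funext x
    simp [pD, this, peval]
  | add p q hp hq =>
    have : peval (p + q) = fun x => peval p x + peval q x := by
      funext x; simp [peval]
    funext x
    have h1 : DifferentiableAt ℝ (peval p) x :=
      ((peval_contDiff p 1).differentiable (by norm_num)).differentiableAt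
    have h2 : DifferentiableAt ℝ (peval q) x :=
      ((peval_contDiff q 1).differentiable (by norm_num)).differentiableAt
    have e1 := congrFun hp x
    have e2 := congrFun hq x
    simp only [pD] at e1 e2 ⊢
    rw [this, fderiv_fun_add h1 h2]
    simp only [add_apply, e1, e2]
    simp [peval]
  | mul_X p j hp =>
    have : peval (p * MvPolynomial.X j) =
        fun x => peval p x * (EuclideanSpace.proj j : Euc n →L[ℝ] ℝ) x := by
      funext x; simp [peval]
    funext x
    have h1 : DifferentiableAt ℝ (peval p) x :=
      ((peval_contDiff p 1).differentiable (by norm_num)).differentiableAt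
    have e1 := congrFun hp x
    simp only [pD] at e1 ⊢
    rw [this, fderiv_fun_mul h1 (ContinuousLinearMap.differentiableAt _)]
    simp only [add_apply, smul_apply, e1,
      ContinuousLinearMap.fderiv]
    rw [MvPolynomial.pderiv_mul, MvPolynomial.pderiv_X]
    by_cases hij : i = j
    · subst hij; simp [peval]; ring
    · have hji : j ≠ i := fun h => hij h.symm
      simp [peval, hji]; try ring

theorem foldr_peval {n : ℕ} (l : List (Fin n)) (P : MPoly n) :
    l.foldr pD (peval P) = peval (l.foldr (fun i Q => MvPolynomial.pderiv i Q) P) := by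
  induction l with
  | nil => rfl
  | cons a l ih => simp only [List.foldr_cons, ih, pD_peval]

theorem coeff_foldr {n : ℕ} (P : MPoly n) (l : List (Fin n)) : ∀ s : Fin n →₀ ℕ,
    ∃ c : ℝ, 1 ≤ c ∧
      MvPolynomial.coeff s (l.foldr (fun i Q => MvPolynomial.pderiv i Q) P) =
        c * MvPolynomial.coeff (s + (l.map fun i => Finsupp.single i 1).sum) P := by
  induction l with
  | nil => intro s; exact ⟨1, le_rfl, by simp⟩
  | cons a l ih =>
    intro s
    obtain ⟨c, hc, h⟩ := ih (s + Finsupp.single a 1)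
    refine ⟨c * (s a + 1), ?_, ?_⟩
    · have : (0 : ℝ) ≤ s a := Nat.cast_nonneg _
      nlinarith
    · simp only [List.foldr_cons, MvPolynomial.coeff_pderiv, h, List.map_cons, List.sum_cons,
        add_assoc]
      ring

/-- the list of directions of a multi-index -/
def dirs {n : ℕ} (α : Fin n → ℕ) : List (Fin n) :=
  (List.finRange n).flatMap fun i => List.replicate (α i) i

theorem dirs_length {n : ℕ} (α : Fin n → ℕ) : (dirs α).length = deg α := by
  simp [dirs, deg, List.length_flatMap, Fin.sum_univ_def]

theorem dirs_sum {n : ℕ} (s : Fin n →₀ ℕ) :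
    ((dirs (fun i => s i)).map fun i => Finsupp.single i 1).sum = s := by
  have : ((dirs (fun i => s i)).map fun i => Finsupp.single i 1).sum
      = ((List.finRange n).map fun i => Finsupp.single i (s i)).sum := by
    unfold dirs
    generalize List.finRange n = L
    induction L with
    | nil => simp
    | cons a L ih => simp [List.flatMap_cons, ih]
  rw [this, ← Fin.sum_univ_def]
  ext j
  simp

theorem coeff_le {m n : ℕ} (P : MPoly n)
    (h : ∀ β : Fin n → ℕ, deg β ≤ m → |mD β (peval P) 0| ≤ 1)
    (s : Fin n →₀ ℕ) (hs : deg (fun i => s i) ≤ m) : |MvPolynomial.coeff s P| ≤ 1 := by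
  have h1 := h (fun i => s i) hs
  have h2 : mD (fun i => s i) (peval P) 0 =
      MvPolynomial.coeff 0 ((dirs fun i => s i).foldr (fun i Q => MvPolynomial.pderiv i Q) P) := by
    change (dirs fun i => s i).foldr pD (peval P) 0 = _
    rw [foldr_peval, ← MvPolynomial.constantCoeff_eq, ← MvPolynomial.eval_zero]
    rfl
  obtain ⟨c, hc, e⟩ := coeff_foldr P (dirs fun i => s i) 0
  rw [h2, e, dirs_sum, zero_add, abs_mul, abs_of_pos (by linarith)] at h1
  nlinarith [abs_nonneg (MvPolynomial.coeff s P)]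

theorem foldr_eq {n : ℕ} (N : ℕ) (F : Euc n → ℝ) (hF : ContDiff ℝ (N : ℕ∞) F)
    (l : List (Fin n)) : l.length ≤ N → ∀ x,
    l.foldr pD F x = iteratedFDeriv ℝ l.length F x
      (fun i => EuclideanSpace.single (l.get i) (1 : ℝ)) := by
  induction l with
  | nil => intro _ x; simp
  | cons a l ih =>
    intro hl x
    have hl' : l.length < N := by simpa using hl
    have e : l.foldr pD F = fun x => iteratedFDeriv ℝ l.length F x
      (fun i => EuclideanSpace.single (l.get i) (1 : ℝ)) := funext (ih hl'.le)
    have hd : DifferentiableAt ℝ (iteratedFDeriv ℝ l.length F) x := by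
      apply (hF.differentiable_iteratedFDeriv (m := l.length) ?_).differentiableAt
      exact_mod_cast hl'
    simp only [List.foldr_cons]
    rw [pD, e]
    erw [hd.iteratedFDeriv_succ_apply_left']
    rfl

theorem mD_eq_zero_of {n m : ℕ} (F G : Euc n → ℝ) (hF : ContDiff ℝ (m : ℕ∞) F)
    (hG : ContDiff ℝ (m : ℕ∞) G) (α : Fin n → ℕ) (hα : deg α ≤ m) (x : Euc n)
    (h : ∀ k ≤ m, iteratedFDeriv ℝ k F x = iteratedFDeriv ℝ k G x) : mD α F x = mD α G x := by
  change (dirs α).foldr pD F x = (dirs α).foldr pD G x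
  rw [← dirs_length] at hα
  rw [foldr_eq m F hF _ hα, foldr_eq m G hG _ hα, h _ hα]

theorem mD_le {n m : ℕ} (F : Euc n → ℝ) (hF : ContDiff ℝ (m : ℕ∞) F) (C : ℝ)
    (α : Fin n → ℕ) (hα : deg α ≤ m) (x : Euc n)
    (h : ∀ k ≤ m, ‖iteratedFDeriv ℝ k F x‖ ≤ C) : |mD α F x| ≤ C := by
  change |(dirs α).foldr pD F x| ≤ C
  rw [← dirs_length] at hα
  rw [foldr_eq m F hF _ hα, ← Real.norm_eq_abs]
  refine (ContinuousMultilinearMap.le_opNorm _ _).trans ?_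
  simpa using h _ hα

theorem compact_bound {E : Type*} [NormedAddCommGroup E] [NormedSpace ℝ E] (m : ℕ) (f : E → ℝ)
    (hf : ContDiff ℝ (m : ℕ∞) f) (K : Set E) (hK : IsCompact K) :
    ∃ B : ℝ, 0 ≤ B ∧ ∀ k ≤ m, ∀ x ∈ K, ‖iteratedFDeriv ℝ k f x‖ ≤ B := by
  have h : ∀ k : ℕ, ∃ b : ℝ, k ≤ m → ∀ x ∈ K, ‖iteratedFDeriv ℝ k f x‖ ≤ b := by
    intro k
    by_cases hk : k ≤ m
    · have hc : Continuous (iteratedFDeriv ℝ k f) :=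
        hf.continuous_iteratedFDeriv (by exact_mod_cast hk)
      obtain ⟨b, hb⟩ := hK.exists_bound_of_continuousOn hc.continuousOn
      exact ⟨b, fun _ => hb⟩
    · exact ⟨0, fun h => absurd h hk⟩
  choose b hb using h
  refine ⟨∑ k ∈ Finset.range (m + 1), |b k|, Finset.sum_nonneg fun _ _ => abs_nonneg _, ?_⟩
  intro k hk x hx
  refine (hb k hk x hx).trans ((le_abs_self _).trans ?_)
  exact Finset.single_le_sum (f := fun k => |b k|) (fun _ _ => abs_nonneg _)
    (Finset.mem_range.2 (by omega))

/-- The cutoff. -/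
def bump (n : ℕ) : ContDiffBump (0 : Euc n) := ⟨1, 2, by norm_num, by norm_num⟩

theorem cut_bound (m n : ℕ) : ∃ A : ℝ, 0 < A ∧ ∀ f : Euc n → ℝ, ContDiff ℝ (m : ℕ∞) f →
    ∀ B : ℝ, 0 ≤ B → (∀ k ≤ m, ∀ x, ‖x‖ ≤ 2 → ‖iteratedFDeriv ℝ k f x‖ ≤ B) →
    ∀ k ≤ m, ∀ x, ‖iteratedFDeriv ℝ k (fun y => bump n y * f y) x‖ ≤ A * B := by
  have hθ : ContDiff ℝ (m : ℕ∞) (bump n) := (bump n).contDiff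
  obtain ⟨T, hT0, hT⟩ := compact_bound m (bump n) hθ (Metric.closedBall 0 2)
    (isCompact_closedBall _ _)
  refine ⟨2 ^ m * (T + 1), by positivity, ?_⟩
  intro f hf B hB h k hk x
  refine (norm_iteratedFDeriv_mul_le hθ hf x (n := k) (by exact_mod_cast hk)).trans ?_
  by_cases hx : ‖x‖ ≤ 2
  · calc ∑ i ∈ Finset.range (k + 1), (k.choose i : ℝ) * ‖iteratedFDeriv ℝ i (bump n) x‖ *
          ‖iteratedFDeriv ℝ (k - i) f x‖
        ≤ ∑ i ∈ Finset.range (k + 1), (k.choose i : ℝ) * (T + 1) * B := by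
          apply Finset.sum_le_sum
          intro i hi
          have hi' : i ≤ k := by simpa [Nat.lt_succ_iff] using hi
          have h1 := hT i (by omega) x (by simpa using hx)
          have h2 := h (k - i) (by omega) x hx
          have h3 : (0 : ℝ) ≤ k.choose i := Nat.cast_nonneg _
          gcongr
          linarith
      _ = 2 ^ k * (T + 1) * B := by
          rw [← Finset.sum_mul, ← Finset.sum_mul]
          congr 2
          exact_mod_cast Nat.sum_range_choose k
      _ ≤ 2 ^ m * (T + 1) * B := by
          gcongr
          norm_num
  · have : ∀ i, iteratedFDeriv ℝ i (bump n) x = 0 := by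
      intro i
      by_contra hne
      have := support_iteratedFDeriv_subset (𝕜 := ℝ) i (f := bump n) (Function.mem_support.2 hne)
      rw [(bump n).tsupport_eq] at this
      apply hx
      simpa [bump] using this
    simp only [this, norm_zero, mul_zero, zero_mul, Finset.sum_const_zero]
    positivity

theorem poly_bound (m n : ℕ) : ∃ B : ℝ, 0 ≤ B ∧ ∀ P : MPoly n, P.totalDegree ≤ m →
    (∀ β : Fin n → ℕ, deg β ≤ m → |mD β (peval P) 0| ≤ 1) →
    ∀ k ≤ m, ∀ x : Euc n, ‖x‖ ≤ 2 → ‖iteratedFDeriv ℝ k (peval P) x‖ ≤ B := by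
  classical
  let S : Finset (Fin n →₀ ℕ) :=
    (Finset.Iic (Finsupp.equivFunOnFinite.symm fun _ => m)).filter fun s => deg (fun i => s i) ≤ m
  have hS : ∀ s : Fin n →₀ ℕ, deg (fun i => s i) ≤ m → s ∈ S := by
    intro s hs
    simp only [S, Finset.mem_filter, Finset.mem_Iic]
    refine ⟨fun i => ?_, hs⟩
    refine le_trans ?_ hs
    exact Finset.single_le_sum (f := fun i => s i) (fun _ _ => Nat.zero_le _) (Finset.mem_univ i)
  have hb := fun s : Fin n →₀ ℕ => compact_bound m (peval (MvPolynomial.monomial s (1 : ℝ)))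
    (peval_contDiff _ _) (Metric.closedBall 0 2) (isCompact_closedBall _ _)
  choose b hb0 hb using hb
  refine ⟨∑ s ∈ S, b s, Finset.sum_nonneg fun s _ => hb0 s, ?_⟩
  intro P hP hc k hk x hx
  have hPS : peval P = fun x => ∑ s ∈ S,
      (MvPolynomial.coeff s P) • peval (MvPolynomial.monomial s (1 : ℝ)) x := by
    funext y
    have hsub : P.support ⊆ S := by
      intro s hs
      apply hS
      refine le_trans ?_ ((MvPolynomial.le_totalDegree hs).trans hP)
      rw [Finsupp.sum_fintype _ _ (fun _ => rfl)]
      rfl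
    have e : P = ∑ s ∈ S, MvPolynomial.monomial s (P.coeff s) := by
      conv_lhs => rw [← MvPolynomial.support_sum_monomial_coeff P]
      apply Finset.sum_subset hsub
      intro s _ hs
      simp [MvPolynomial.notMem_support_iff.1 hs]
    conv_lhs => rw [e]
    simp [peval, MvPolynomial.eval_monomial]
  have hcd : ∀ s : Fin n →₀ ℕ, ContDiff ℝ k fun x : Euc n =>
      (MvPolynomial.coeff s P) • peval (MvPolynomial.monomial s (1 : ℝ)) x :=
    fun s => (peval_contDiff _ _).const_smul _
  rw [hPS, iteratedFDeriv_fun_sum_apply (fun s _ => (hcd s).contDiffAt)]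
  refine norm_sum_le_of_le _ ?_
  intro s hs
  rw [iteratedFDeriv_const_smul_apply' (peval_contDiff _ _).contDiffAt, norm_smul]
  have h1 : |MvPolynomial.coeff s P| ≤ 1 := coeff_le P hc s (Finset.mem_filter.1 hs).2
  have h2 := hb s k hk x (by simpa using hx)
  rw [Real.norm_eq_abs]
  nlinarith [norm_nonneg (iteratedFDeriv ℝ k (peval (MvPolynomial.monomial s (1 : ℝ))) x),
    abs_nonneg (MvPolynomial.coeff s P)]

/-- The one-dimensional profile. -/
def prof (m : ℕ) (t : ℝ) : ℝ := t ^ m * Real.smoothTransition (2 * t - 1)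

theorem prof_contDiff (m : ℕ) (N : ℕ∞) : ContDiff ℝ N (prof m) :=
  
  (contDiff_id.pow m).mul (Real.smoothTransition.contDiff.comp
    ((contDiff_const.mul contDiff_id).sub contDiff_const))

theorem prof_nonneg (m : ℕ) (t : ℝ) : 0 ≤ prof m t := by
  unfold prof
  rcases le_total t 0 with h | h
  · simp [Real.smoothTransition.zero_of_nonpos (show 2 * t - 1 ≤ 0 by linarith)]
  · have := Real.smoothTransition.nonneg (2 * t - 1)
    positivity

theorem prof_bound (m : ℕ) : ∃ C : ℝ, 0 ≤ C ∧ ∀ k ≤ m, ∀ s : ℝ,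
    ‖iteratedFDeriv ℝ k (prof m) s‖ ≤ C * (1 + |s|) ^ (m - k) := by
  obtain ⟨B, hB0, hB⟩ := compact_bound m (prof m) (prof_contDiff m _) (Set.Icc 0 1) isCompact_Icc
  refine ⟨B + m.factorial, by positivity, ?_⟩
  intro k hk s
  have h1 : (1 : ℝ) ≤ (1 + |s|) ^ (m - k) := one_le_pow₀ (by linarith [abs_nonneg s])
  have hf : (0 : ℝ) ≤ m.factorial := Nat.cast_nonneg _
  rcases lt_or_ge s 0 with hs | hs
  · have : prof m =ᶠ[nhds s] fun _ => 0 := by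
      filter_upwards [Iio_mem_nhds hs] with t ht
      have ht' : t < 0 := ht
      simp [prof, Real.smoothTransition.zero_of_nonpos (show 2 * t - 1 ≤ 0 by linarith)]
    rw [(this.iteratedFDeriv ℝ k).eq_of_nhds]
    simp only [iteratedFDeriv_fun_zero, Pi.zero_apply, norm_zero]
    positivity
  rcases le_or_gt s 1 with hs1 | hs1
  · have := hB k hk s ⟨hs, hs1⟩
    nlinarith
  · have : prof m =ᶠ[nhds s] fun t => t ^ m := by
      filter_upwards [Ioi_mem_nhds hs1] with t ht
      have ht' : 1 < t := ht
      simp [prof, Real.smoothTransition.one_of_one_le (show 1 ≤ 2 * t - 1 by linarith)]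
    rw [(this.iteratedFDeriv ℝ k).eq_of_nhds, norm_iteratedFDeriv_eq_norm_iteratedDeriv,
      iteratedDeriv_eq_iterate, iter_deriv_pow, norm_mul, norm_pow, Real.norm_eq_abs,
      Real.norm_eq_abs]
    have e : |∏ i ∈ Finset.range k, ((m : ℝ) - i)| ≤ m.factorial := by
      have : ∏ i ∈ Finset.range k, ((m : ℝ) - i) = (m.descFactorial k : ℝ) := by
        rw [Nat.descFactorial_eq_prod_range, Nat.cast_prod]
        apply Finset.prod_congr rfl
        intro i hi
        rw [Nat.cast_sub]
        have := Finset.mem_range.1 hi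
        omega
      rw [this, Nat.abs_cast]
      exact_mod_cast Nat.le_of_dvd (Nat.factorial_pos m) (Dvd.intro_left _ (Nat.factorial_mul_descFactorial hk))
    have h2 : |s| ^ (m - k) ≤ (1 + |s|) ^ (m - k) := by
      gcongr
      linarith
    calc _ ≤ (m.factorial : ℝ) * (1 + |s|) ^ (m - k) := by gcongr
      _ ≤ _ := by gcongr; linarith

/-- Signed inverse scale. -/
def sg (ρ : ℝ) (b : Bool) : ℝ := if b then ρ⁻¹ else -ρ⁻¹

theorem abs_sg {ρ : ℝ} (h : 0 < ρ) (b : Bool) : |sg ρ b| = ρ⁻¹ := by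
  cases b <;> simp [sg, abs_of_pos h]

/-- A nonnegative function vanishing near the origin, comparable to `|x|^m` for `|x| ≥ n ρ`. -/
def phi (m n : ℕ) (ρ : ℝ) (x : Euc n) : ℝ :=
  ∑ p : Fin n × Bool, ρ ^ m • prof m ((sg ρ p.2 • (EuclideanSpace.proj p.1 : Euc n →L[ℝ] ℝ)) x)

theorem phi_contDiff (m n : ℕ) (ρ : ℝ) (N : ℕ∞) : ContDiff ℝ N (phi m n ρ) := by
  unfold phi
  apply ContDiff.sum
  intro p _
  exact ((prof_contDiff m N).comp (ContinuousLinearMap.contDiff _)).const_smul (ρ ^ m)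

theorem phi_nonneg (m n : ℕ) (ρ : ℝ) (hρ : 0 < ρ) (x : Euc n) : 0 ≤ phi m n ρ x := by
  refine Finset.sum_nonneg fun p _ => ?_
  exact mul_nonneg (by positivity) (prof_nonneg _ _)

theorem coord_le {n : ℕ} (x : Euc n) (i : Fin n) : |x i| ≤ ‖x‖ := by
  simpa using PiLp.norm_apply_le x i

theorem phi_zero (m n : ℕ) (ρ : ℝ) (hρ : 0 < ρ) : phi m n ρ =ᶠ[nhds 0] fun _ => 0 := by
  filter_upwards [Metric.ball_mem_nhds (0 : Euc n) (half_pos hρ)] with x hx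
  refine Finset.sum_eq_zero fun p _ => ?_
  have hx' : ‖x‖ < ρ / 2 := by simpa using hx
  have h1 : sg ρ p.2 * x p.1 ≤ 1 / 2 := by
    calc sg ρ p.2 * x p.1 ≤ |sg ρ p.2 * x p.1| := le_abs_self _
      _ = ρ⁻¹ * |x p.1| := by rw [abs_mul, abs_sg hρ]
      _ ≤ ρ⁻¹ * (ρ / 2) := by
        gcongr
        exact (coord_le x p.1).trans hx'.le
      _ = 1 / 2 := by field_simp
  have h2 : Real.smoothTransition (2 * (sg ρ p.2 * x p.1) - 1) = 0 :=
    Real.smoothTransition.zero_of_nonpos (by linarith)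
  simp [prof, h2]

theorem phi_bound (m n : ℕ) : ∃ B : ℝ, 0 ≤ B ∧ ∀ ρ : ℝ, 0 < ρ → ρ ≤ 1 →
    ∀ k ≤ m, ∀ x : Euc n, ‖x‖ ≤ 2 → ‖iteratedFDeriv ℝ k (phi m n ρ) x‖ ≤ B := by
  obtain ⟨C, hC0, hC⟩ := prof_bound m
  refine ⟨∑ p : Fin n × Bool, C * 3 ^ m, Finset.sum_nonneg fun _ _ => by positivity, ?_⟩
  intro ρ hρ hρ1 k hk x hx
  have hcd : ∀ p : Fin n × Bool, ContDiff ℝ (k : ℕ∞) fun x : Euc n =>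
      prof m ((sg ρ p.2 • (EuclideanSpace.proj p.1 : Euc n →L[ℝ] ℝ)) x) :=
    fun p => (prof_contDiff m k).comp (ContinuousLinearMap.contDiff _)
  unfold phi
  rw [iteratedFDeriv_fun_sum_apply (fun p _ => ((hcd p).const_smul (ρ ^ m)).contDiffAt)]
  refine norm_sum_le_of_le _ ?_
  intro p _
  rw [iteratedFDeriv_const_smul_apply' (hcd p).contDiffAt, norm_smul]
  set L : Euc n →L[ℝ] ℝ := sg ρ p.2 • (EuclideanSpace.proj p.1 : Euc n →L[ℝ] ℝ) with hL
  have hLn : ‖L‖ ≤ ρ⁻¹ := by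
    refine ContinuousLinearMap.opNorm_le_bound _ (by positivity) fun y => ?_
    simp only [hL, smul_apply, PiLp.proj_apply, norm_smul, Real.norm_eq_abs, abs_sg hρ]
    gcongr
    exact coord_le y p.1
  have hLx : |L x| ≤ ρ⁻¹ * 2 := by
    have := L.le_opNorm x
    rw [Real.norm_eq_abs] at this
    refine this.trans ?_
    gcongr
  have e := L.iteratedFDeriv_comp_right (prof_contDiff m k) x (i := k) le_rfl
  have e' : iteratedFDeriv ℝ k (fun x => prof m (L x)) x = _ := e
  rw [e']
  have h1 := ContinuousMultilinearMap.norm_compContinuousLinearMap_le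
    (iteratedFDeriv ℝ k (prof m) (L x)) (fun _ : Fin k => L)
  simp only [Finset.prod_const, Finset.card_univ, Fintype.card_fin] at h1
  rw [Real.norm_eq_abs, abs_of_pos (by positivity : (0 : ℝ) < ρ ^ m)]
  calc ρ ^ m * _ ≤ ρ ^ m * (C * (1 + ρ⁻¹ * 2) ^ (m - k) * ρ⁻¹ ^ k) := by
        gcongr
        refine h1.trans ?_
        gcongr
        refine (hC k hk (L x)).trans ?_
        gcongr
    _ = C * (ρ + 2) ^ (m - k) := by
        have e1 : ρ ^ m = ρ ^ (m - k) * ρ ^ k := by rw [← pow_add]; congr 1; omega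
        have e2 : ρ + 2 = ρ * (1 + ρ⁻¹ * 2) := by field_simp
        rw [e2, mul_pow, e1, inv_pow]
        field_simp
    _ ≤ C * 3 ^ m := by
        gcongr
        calc (ρ + 2) ^ (m - k) ≤ 3 ^ (m - k) := by gcongr; linarith
          _ ≤ 3 ^ m := by gcongr <;> first | norm_num | omega

theorem exists_coord {n : ℕ} (hn : 0 < n) (x : Euc n) : ∃ i, ‖x‖ ≤ n * |x i| := by
  by_contra! h
  have hn' : (1 : ℝ) ≤ n := by exact_mod_cast hn
  have : Nonempty (Fin n) := ⟨⟨0, hn⟩⟩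
  have h1 : ∑ i, ((n : ℝ) * |x i|) ^ 2 < ∑ _i : Fin n, ‖x‖ ^ 2 := by
    apply Finset.sum_lt_sum_of_nonempty Finset.univ_nonempty
    intro i _
    have := h i
    gcongr
  have h2 : ‖x‖ ^ 2 = ∑ i, |x i| ^ 2 := by
    rw [EuclideanSpace.norm_sq_eq]; rfl
  simp only [mul_pow, ← Finset.mul_sum, ← h2, Finset.sum_const, Finset.card_univ,
    Fintype.card_fin, nsmul_eq_mul] at h1
  nlinarith [mul_nonneg (mul_nonneg (by linarith : (0 : ℝ) ≤ n) (by linarith : (0 : ℝ) ≤ n - 1))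
    (sq_nonneg ‖x‖)]

theorem phi_lower (m n : ℕ) (hn : 0 < n) (d : ℝ) (hd : 0 < d) (x : Euc n) (hx : d ≤ ‖x‖) :
    ‖x‖ ^ m ≤ n ^ m * phi m n (d / n) x := by
  obtain ⟨i, hi⟩ := exists_coord hn x
  have hn' : (0 : ℝ) < n := by exact_mod_cast hn
  set ρ := d / n with hρd
  have hρ : 0 < ρ := by positivity
  have hxi : ρ ≤ |x i| := by
    rw [hρd, div_le_iff₀ hn']; linarith
  have key : |x i| ^ m ≤ phi m n ρ x := by
    have hb : ∃ b : Bool, sg ρ b * x i = ρ⁻¹ * |x i| := by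
      rcases le_total 0 (x i) with h | h
      · exact ⟨true, by simp [sg, abs_of_nonneg h]⟩
      · exact ⟨false, by simp [sg, abs_of_nonpos h]⟩
    obtain ⟨b, hb⟩ := hb
    have h1 : ρ ^ m • prof m ((sg ρ (i, b).2 • (EuclideanSpace.proj (i, b).1 : Euc n →L[ℝ] ℝ)) x)
        ≤ phi m n ρ x :=
      Finset.single_le_sum (f := fun p : Fin n × Bool =>
        ρ ^ m • prof m ((sg ρ p.2 • (EuclideanSpace.proj p.1 : Euc n →L[ℝ] ℝ)) x))
        (fun p _ => mul_nonneg (by positivity) (prof_nonneg _ _)) (Finset.mem_univ (i, b))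
    refine le_trans (le_of_eq ?_) h1
    have h2 : 1 ≤ ρ⁻¹ * |x i| := by
      rw [← div_eq_inv_mul, le_div_iff₀ hρ]; linarith
    simp only [smul_apply, PiLp.proj_apply, smul_eq_mul, hb, prof]
    rw [Real.smoothTransition.one_of_one_le (by linarith), mul_one, ← mul_pow]
    congr 1
    field_simp
  calc ‖x‖ ^ m ≤ (n * |x i|) ^ m := by gcongr
    _ = n ^ m * |x i| ^ m := mul_pow _ _ _
    _ ≤ _ := by gcongr

/-- **Lemma 3.1 (B)**: every `P ∈ Γ₀⁺` is the `m`-jet at `0` of a nonnegative `C^m`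
function of controlled norm. -/
theorem Gamma0plus_has_nonneg_extension (m n : ℕ) (hm : 0 < m) (hn : 0 < n) :
    ∃ C : ℝ, 0 < C ∧
      ∀ P ∈ Gamma0plus m n,
        ∃ F : Euc n → ℝ, CmNormLe m n F C ∧ (∀ y, 0 ≤ F y) ∧ IsJetPlusAt m n F 0 P := by
  obtain ⟨A, hA0, hA⟩ := cut_bound m n
  obtain ⟨B, hB0, hB⟩ := poly_bound m n
  obtain ⟨D, hD0, hD⟩ := phi_bound m n
  have hn1 : (1 : ℝ) ≤ n := by exact_mod_cast hn
  have hn' : (0 : ℝ) < n := by linarith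
  refine ⟨A * B + A * (n ^ m * D) * 2 + 1, by positivity, ?_⟩
  rintro P ⟨hPd, hP1, hP2, hP3⟩
  have hex : ∀ j : ℕ, ∃ d : ℝ, 0 < d ∧ d ≤ (1 / 2) ^ j ∧
      ∀ x : Euc n, ‖x‖ ≤ d → 0 ≤ peval P x + (1 / 2) ^ (j + 1) * ‖x‖ ^ m := by
    intro j
    obtain ⟨δ, hδ, h⟩ := hP3 ((1 / 2) ^ (j + 1)) (by positivity)
    exact ⟨min δ ((1 / 2) ^ j), lt_min hδ (by positivity), min_le_right _ _,
      fun x hx => h x (hx.trans (min_le_left _ _))⟩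
  choose d hd0 hd1 hd2 using hex
  have hρ0 : ∀ j, 0 < d j / n := fun j => div_pos (hd0 j) hn'
  have hρ1 : ∀ j, d j / n ≤ 1 := by
    intro j
    rw [div_le_one hn']
    exact ((hd1 j).trans (pow_le_one₀ (by norm_num) (by norm_num))).trans hn1
  let g : ℕ → Euc n → ℝ := fun j x => ((1 / 2 : ℝ) ^ j * n ^ m) • phi m n (d j / n) x
  have hg : ∀ j, ContDiff ℝ (m : ℕ∞) (g j) := fun j => (phi_contDiff m n _ m).const_smul _
  have hgb : ∀ j, ∀ k ≤ m, ∀ x, ‖x‖ ≤ 2 →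
      ‖iteratedFDeriv ℝ k (g j) x‖ ≤ (1 / 2 : ℝ) ^ j * (n ^ m * D) := by
    intro j k hk x hx
    have hc : ContDiff ℝ (k : ℕ∞) (phi m n (d j / n)) := phi_contDiff m n _ k
    rw [iteratedFDeriv_const_smul_apply' hc.contDiffAt, norm_smul, Real.norm_eq_abs,
      abs_of_nonneg (by positivity), mul_assoc]
    gcongr
    exact hD _ (hρ0 j) (hρ1 j) k hk x hx
  have hθ : ContDiff ℝ (m : ℕ∞) (bump n) := (bump n).contDiff
  let f : ℕ → Euc n → ℝ := fun j x => bump n x * g j x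
  have hf : ∀ j, ContDiff ℝ (m : ℕ∞) (f j) := fun j => hθ.mul (hg j)
  let v : ℕ → ℕ → ℝ := fun _ j => A * (n ^ m * D) * (1 / 2 : ℝ) ^ j
  have hv1 : HasSum (fun j : ℕ => A * (n ^ m * D) * (1 / 2 : ℝ) ^ j) (A * (n ^ m * D) * 2) :=
    hasSum_geometric_two.mul_left _
  have hv : ∀ k : ℕ, (k : ℕ∞) ≤ (m : ℕ∞) → Summable (v k) := fun k _ => hv1.summable
  have hfb' : ∀ k ≤ m, ∀ j x, ‖iteratedFDeriv ℝ k (f j) x‖ ≤ v k j := by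
    intro k hk j x
    refine (hA (g j) (hg j) _ (by positivity) (hgb j) k hk x).trans (le_of_eq ?_)
    simp only [v]
    ring
  have hfb : ∀ (k : ℕ) (j : ℕ) (x : Euc n), (k : ℕ∞) ≤ (m : ℕ∞) →
      ‖iteratedFDeriv ℝ k (f j) x‖ ≤ v k j := fun k j x hk => hfb' k (by exact_mod_cast hk) j x
  have hG : ContDiff ℝ (m : ℕ∞) (fun x => ∑' j, f j x) := contDiff_tsum hf hv hfb
  have hPc : ContDiff ℝ (m : ℕ∞) (fun x => bump n x * peval P x) := hθ.mul (peval_contDiff P _)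
  have hFc : ContDiff ℝ (m : ℕ∞) (fun x => bump n x * peval P x + ∑' j, f j x) := hPc.add hG
  have hadd : ∀ k ≤ m, ∀ x, iteratedFDeriv ℝ k
      (fun x => bump n x * peval P x + ∑' j, f j x) x =
      iteratedFDeriv ℝ k (fun x => bump n x * peval P x) x +
        ∑' j, iteratedFDeriv ℝ k (f j) x := by
    intro k hk x
    have hk' : ((k : ℕ∞) : WithTop ℕ∞) ≤ ((m : ℕ∞) : WithTop ℕ∞) := by exact_mod_cast hk
    rw [← iteratedFDeriv_tsum_apply hf hv hfb (by exact_mod_cast hk) x]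
    exact iteratedFDeriv_add_apply (hPc.of_le hk').contDiffAt (hG.of_le hk').contDiffAt
  have hf0 : ∀ j x, 0 ≤ f j x := fun j x =>
    mul_nonneg (bump n).nonneg (mul_nonneg (by positivity) (phi_nonneg m n _ (hρ0 j) x))
  refine ⟨fun x => bump n x * peval P x + ∑' j, f j x, ⟨hFc, ?_⟩, ?_, hPd, ?_⟩
  · intro α hα x
    apply mD_le _ hFc _ α hα x
    intro k hk
    rw [hadd k hk x]
    have h1 := hA (peval P) (peval_contDiff P _) B hB0 (hB P hPd hP1) k hk x
    have h2 : ‖∑' j, iteratedFDeriv ℝ k (f j) x‖ ≤ A * (n ^ m * D) * 2 :=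
      tsum_of_norm_bounded hv1 (fun j => hfb' k hk j x)
    have h3 := norm_add_le (iteratedFDeriv ℝ k (fun x => bump n x * peval P x) x)
      (∑' j, iteratedFDeriv ℝ k (f j) x)
    linarith
  · intro x
    have hsum : Summable fun j => f j x := by
      refine Summable.of_norm_bounded hv1.summable fun j => ?_
      have := hfb' 0 (Nat.zero_le _) j x
      rwa [norm_iteratedFDeriv_zero] at this
    by_cases hx : x = 0
    · subst hx
      have h1 : 0 ≤ peval P 0 := by simpa [hm.ne'] using hP2 0
      exact add_nonneg (mul_nonneg (bump n).nonneg h1) (tsum_nonneg fun j => hf0 j 0)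
    · have hx' : 0 < ‖x‖ := norm_pos_iff.2 hx
      have hj : ∃ j, d j < ‖x‖ := by
        obtain ⟨j, hj⟩ := exists_pow_lt_of_lt_one hx' (by norm_num : (1 / 2 : ℝ) < 1)
        exact ⟨j, (hd1 j).trans_lt hj⟩
      have hmin : ∃ j, d j < ‖x‖ ∧ 0 ≤ peval P x + (1 / 2) ^ j * ‖x‖ ^ m := by
        classical
        refine ⟨Nat.find hj, Nat.find_spec hj, ?_⟩
        rcases h : Nat.find hj with _ | i
        · simpa using hP2 x
        · exact hd2 i x (not_lt.1 (Nat.find_min hj (by omega)))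
      obtain ⟨j, hj1, hj2⟩ := hmin
      have h1 : f j x ≤ ∑' j, f j x := hsum.le_tsum j (fun i _ => hf0 i x)
      have h2 := phi_lower m n hn (d j) (hd0 j) x hj1.le
      have h3 : (1 / 2 : ℝ) ^ j * ‖x‖ ^ m ≤ g j x := by
        simp only [g, smul_eq_mul, mul_assoc]
        gcongr
      have h4 : 0 ≤ bump n x * (peval P x + g j x) :=
        mul_nonneg (bump n).nonneg (by linarith)
      have h5 : f j x = bump n x * g j x := rfl
      rw [mul_add] at h4
      linarith
  · intro α hα
    apply mD_eq_zero_of _ _ (peval_contDiff P _) hFc α hα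
    intro k hk
    rw [hadd k hk 0]
    have h1 : ∀ j, iteratedFDeriv ℝ k (f j) 0 = 0 := by
      intro j
      have : f j =ᶠ[nhds 0] fun _ => 0 := by
        filter_upwards [phi_zero m n _ (hρ0 j)] with x hx
        simp [f, g, hx]
      rw [(this.iteratedFDeriv ℝ k).eq_of_nhds]
      simp
    have h2 : (fun x => bump n x * peval P x) =ᶠ[nhds 0] peval P := by
      filter_upwards [(bump n).eventuallyEq_one] with x hx
      rw [hx]; simp
    rw [(h2.iteratedFDeriv ℝ k).eq_of_nhds]
    simp [h1]


end
end
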